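/- arXiv:math/0502270 — 2 statements merged into one kernel-verified Lean document; each statement's English description precedes it below -/
import Mathlib

section
/- Let (W,S) be a Coxeter system satisfying: (0) for all s,t ∈ S with m(s,t) even, m(s,t) = 2; (1) for all s ≠ t ∈ S with m(s,t) odd, {s,t} is a maximal spherical subset of S; (2) there is no three-element subset {s,t,u} ⊆ S such that m(s,t) and m(t,u) are both odd; (3) for all s ≠ t ∈ S with m(s,t) odd, the number of maximal spherical subsets of S intersecting {s,t} is at most two. Let (W',S') be a Coxeter system and suppose there exists a group isomorphism φ : W → W'. Then for each s' ≠ t' ∈ S' with m'(s',t') odd, the number of maximal spherical subsets of S' intersecting {s',t'} is at most two. -/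
/-- The standard parabolic subgroup `W_T` of a Coxeter system, generated by the
simple reflections indexed by `T`. -/
def CoxeterSystem.parabolic {B W : Type*} [Group W] {M : CoxeterMatrix B}
    (cs : CoxeterSystem M W) (T : Set B) : Subgroup W :=
  Subgroup.closure (cs.simple '' T)

/-- `T` is a spherical subset: the parabolic subgroup `W_T` is finite. -/
def CoxeterSystem.IsSpherical {B W : Type*} [Group W] {M : CoxeterMatrix B}
    (cs : CoxeterSystem M W) (T : Set B) : Prop :=
  Finite (cs.parabolic T)

/-- `T` is a maximal spherical subset: spherical and maximal under inclusion
among spherical subsets. -/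
def CoxeterSystem.IsMaxSpherical {B W : Type*} [Group W] {M : CoxeterMatrix B}
    (cs : CoxeterSystem M W) (T : Set B) : Prop :=
  cs.IsSpherical T ∧ ∀ U : Set B, cs.IsSpherical U → T ⊆ U → U = T

/-- The conjugate subgroup `g H g⁻¹`. -/
def conjSubgroup {G : Type*} [Group G] (g : G) (H : Subgroup G) : Subgroup G :=
  Subgroup.map (MulAut.conj g).toMonoidHom H

/-!
A Coxeter group acts on the dual of its geometric representation, and a finite subgroup `F` fixes a
point in the interior of the Tits cone, namely the sum of the `F`-orbit of a point of the open
fundamental chamber. The stabilizer of such a point is a conjugate of a finite parabolic subgroup.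
Hence the maximal finite subgroups of `W` are the conjugates of the `W_T` with `T` maximal
spherical, and different `T` give different conjugacy classes: an isomorphism `W ≃ W'` induces a
bijection between maximal spherical subsets.

The dihedral group of an odd edge `{s', t'}` is finite and not commutative, so under conditions (0)
and (1) it lies in a conjugate of `W_{s,t}` for an odd edge `{s, t}` of `S`. By condition (2) no
other odd edge of `S` touches `{s, t}`, so `W` has a character which is `-1` at `s` and `t` and `1`
at the other generators. It is `-1` at the involutions of `W_{s,t}`, hence at `s'` and `t'`; a
maximal spherical subset meeting `{s', t'}` therefore corresponds to one meeting `{s, t}`.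
-/

namespace CoxeterGroup

open Module Polynomial.Chebyshev Real

section Conjugation

variable {G : Type*} [Group G]

lemma mem_conjSubgroup {g x : G} {H : Subgroup G} : x ∈ conjSubgroup g H ↔ g⁻¹ * x * g ∈ H := by
  rw [conjSubgroup, Subgroup.mem_map_equiv, MulAut.conj_symm_apply]

lemma conjSubgroup_le_conjSubgroup {g : G} {H K : Subgroup G} :
    conjSubgroup g H ≤ conjSubgroup g K ↔ H ≤ K :=
  Subgroup.map_le_map_iff_of_injective (MulAut.conj g).injective

lemma conjSubgroup_conjSubgroup (g h : G) (H : Subgroup G) :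
    conjSubgroup g (conjSubgroup h H) = conjSubgroup (g * h) H := by
  ext x
  simp only [mem_conjSubgroup, mul_inv_rev, mul_assoc]

lemma conjSubgroup_inv_conjSubgroup (g : G) (H : Subgroup G) :
    conjSubgroup g⁻¹ (conjSubgroup g H) = H := by
  ext x
  simp [mem_conjSubgroup, mul_assoc]

lemma finite_conjSubgroup (g : G) (H : Subgroup G) [Finite H] : Finite (conjSubgroup g H) :=
  Finite.of_equiv H ((MulAut.conj g).subgroupMap H).toEquiv

end Conjugation

/-! ### The geometric representation -/

lemma reflection_mul_reflection_pow_eq_one {V : Type*} [AddCommGroup V] [Module ℝ V] {x y : V}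
    {f g : Dual ℝ V} (hf : f x = 2) (hg : g y = 2) {m : ℕ} (hm : 3 ≤ m)
    (hfg : f y * g x = 4 * cos (π / m) ^ 2) : (reflection hf * reflection hg) ^ m = 1 := by
  set θ : ℝ := 2 * (π / m) with hθ
  have hm3 : (3 : ℝ) ≤ m := by exact_mod_cast hm
  have hmθ : m * θ = 2 * π := by rw [hθ]; field_simp
  have hθ_pos : 0 < θ := by positivity
  have hsin : sin θ ≠ 0 := (sin_pos_of_pos_of_lt_pi hθ_pos (by nlinarith [pi_pos])).ne'
  have ht : 2 * cos θ = f y * g x - 2 := by rw [hfg, hθ, cos_two_mul]; ring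
  have hS (n : ℤ) : (S ℝ n).eval (2 * cos θ) * sin θ = sin ((n + 1) * θ) := S_two_mul_real_cos θ n
  ext1 z
  rw [reflection_mul_reflection_pow_apply hf hg m z _ ht]
  obtain ⟨k, rfl⟩ | ⟨k, rfl⟩ := Nat.even_or_odd m
  · have hk : (S ℝ (k - 1)).eval (2 * cos θ) = 0 := by
      refine (mul_eq_zero_iff_right hsin).mp ?_
      rw [hS, show (((k - 1 : ℤ) : ℝ) + 1) * θ = π by push_cast at hmθ ⊢; linarith, sin_pi]
    have h₁ : (((k + k : ℕ) : ℤ) - 1) / 2 = k - 1 := by lia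
    have h₂ : (((k + k : ℕ) : ℤ) - 2) / 2 = k - 1 := by lia
    rw [h₁, h₂, hk]
    simp
  · have hk : (S ℝ k).eval (2 * cos θ) + (S ℝ (k - 1)).eval (2 * cos θ) = 0 := by
      refine (mul_eq_zero_iff_right hsin).mp ?_
      rw [add_mul, hS, hS, show ((k : ℤ) + 1 : ℝ) * θ = 2 * π - k * θ by
        push_cast at hmθ ⊢; linarith, sin_two_pi_sub]
      simp
    have h₁ : (((2 * k + 1 : ℕ) : ℤ) - 1) / 2 = k := by lia
    have h₂ : (((2 * k + 1 : ℕ) : ℤ) - 2) / 2 = k - 1 := by lia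
    have h₃ : (((2 * k + 1 : ℕ) : ℤ) - 3) / 2 = k - 1 := by lia
    have h₄ : ((2 * k + 1 : ℕ) : ℤ) / 2 = k := by lia
    rw [h₁, h₂, h₃, h₄, hk]
    simp

lemma chebyshevS_eval_two_mul_cos_nonneg {m : ℕ} (hm : m ≠ 1) {n : ℤ} (hn : -1 ≤ n)
    (hnm : m ≠ 0 → n < m) : 0 ≤ (S ℝ n).eval (2 * cos (π / m)) := by
  have hn' : (0 : ℝ) ≤ n + 1 := by exact_mod_cast (by lia : 0 ≤ n + 1)
  obtain rfl | hm0 := eq_or_ne m 0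
  · simpa using hn'
  have hm2 : (2 : ℝ) ≤ m := by exact_mod_cast (by lia : 2 ≤ m)
  have hnm' : (n + 1 : ℝ) ≤ m := by exact_mod_cast (by have := hnm hm0; lia : n + 1 ≤ (m : ℤ))
  have hmπ : m * (π / m) = π := by field_simp
  have hsin : 0 < sin (π / m) :=
    sin_pos_of_pos_of_lt_pi (by positivity) (by nlinarith [pi_pos, hmπ])
  refine nonneg_of_mul_nonneg_left ?_ hsin
  rw [S_two_mul_real_cos]
  refine sin_nonneg_of_nonneg_of_le_pi (by positivity) ?_
  calc (n + 1) * (π / m) ≤ m * (π / m) := by gcongr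
    _ = π := hmπ

section GeometricRepresentation

variable {B : Type*}

/-- The simple root `α i` of the geometric representation, which has the simple roots as a basis. -/
noncomputable def root (i : B) : B →₀ ℝ := Finsupp.single i 1

lemma root_apply [DecidableEq B] (i j : B) : root i j = if i = j then 1 else 0 :=
  Finsupp.single_apply

lemma root_injective : Function.Injective (root (B := B)) :=
  Finsupp.single_left_injective one_ne_zero

lemma root_nonneg (i : B) : 0 ≤ root i := Finsupp.single_nonneg.mpr zero_le_one

lemma root_ne_zero (i : B) : root i ≠ 0 := Finsupp.single_ne_zero.mpr one_ne_zero

variable (M : CoxeterMatrix B)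

/-- The entry `-2 cos (π / m)` of the Cartan matrix. For `m = ∞`, encoded as `M i j = 0`, the
convention `π / 0 = 0` gives the value `-2`, as it should. -/
noncomputable def cartan (i j : B) : ℝ := -(2 * cos (π / M i j))

lemma cartan_self (i : B) : cartan M i i = 2 := by simp [cartan]

lemma cartan_comm (i j : B) : cartan M i j = cartan M j i := by rw [cartan, cartan, M.symmetric]

/-- The simple coroot: the functional pairing with `α i` by twice the Tits form. -/
noncomputable def coroot (i : B) : Dual ℝ (B →₀ ℝ) := Finsupp.linearCombination ℝ (cartan M i)

lemma coroot_root (i j : B) : coroot M i (root j) = cartan M i j := by simp [coroot, root]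

lemma coroot_root_self (i : B) : coroot M i (root i) = 2 := by rw [coroot_root, cartan_self]

/-- The simple reflection `v ↦ v - ⟨v, α i ^∨⟩ α i`. -/
noncomputable def refl (i : B) : (B →₀ ℝ) ≃ₗ[ℝ] (B →₀ ℝ) := reflection (coroot_root_self M i)

lemma refl_apply (i : B) (v : B →₀ ℝ) : refl M i v = v - coroot M i v • root i :=
  reflection_apply _ _

lemma refl_mul_self (i : B) : refl M i * refl M i = 1 := by
  ext1 v
  exact involutive_reflection (coroot_root_self M i) v

lemma isLiftable_refl : M.IsLiftable (refl M) := by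
  intro i j
  obtain rfl | hij := eq_or_ne i j
  · rw [M.diagonal, pow_one, refl_mul_self]
  have h1 : M i j ≠ 1 := M.off_diagonal i j hij
  obtain h0 | h2 | h3 : M i j = 0 ∨ M i j = 2 ∨ 3 ≤ M i j := by lia
  · rw [h0, pow_zero]
  · have hc : cartan M i j = 0 := by simp [cartan, h2]
    ext1 v
    rw [h2, pow_two]
    simp only [LinearEquiv.mul_apply, LinearEquiv.coe_one, id, refl_apply, map_sub, map_smul,
      coroot_root, cartan_self, cartan_comm M j i, hc]
    module
  · refine reflection_mul_reflection_pow_eq_one _ _ h3 ?_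
    rw [coroot_root, coroot_root, cartan_comm M j i, cartan]
    ring

/-- Twice the Tits form, normalized so that every root has norm `2`. -/
noncomputable def titsForm : LinearMap.BilinForm ℝ (B →₀ ℝ) :=
  Finsupp.linearCombination ℝ (coroot M)

lemma titsForm_root (i : B) : titsForm M (root i) = coroot M i := by simp [titsForm, root]

lemma titsForm_comm (u v : B →₀ ℝ) : titsForm M u v = titsForm M v u := by
  have h : LinearMap.flip (titsForm M) = titsForm M := by
    ext i j
    simpa [titsForm, coroot] using cartan_comm M j i
  rw [← LinearMap.flip_apply, h]

lemma titsForm_root_right (v : B →₀ ℝ) (i : B) : titsForm M v (root i) = coroot M i v := by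
  rw [titsForm_comm, titsForm_root]

lemma titsForm_refl (i : B) (u v : B →₀ ℝ) :
    titsForm M (refl M i u) (refl M i v) = titsForm M u v := by
  simp only [refl_apply, map_sub, map_smul, LinearMap.sub_apply, LinearMap.smul_apply, smul_eq_mul,
    titsForm_root, titsForm_root_right, coroot_root_self]
  ring

variable {M} {W : Type*} [Group W] (cs : CoxeterSystem M W)

/-- The geometric representation of a Coxeter group. -/
noncomputable def rep : W →* ((B →₀ ℝ) ≃ₗ[ℝ] (B →₀ ℝ)) := cs.lift ⟨refl M, isLiftable_refl M⟩

lemma rep_simple (i : B) : rep cs (cs.simple i) = refl M i := cs.lift_apply_simple _ i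

lemma rep_mul_apply (u w : W) (v : B →₀ ℝ) : rep cs (u * w) v = rep cs u (rep cs w v) := by
  rw [map_mul, LinearEquiv.mul_apply]

lemma rep_inv_rep (w : W) (v : B →₀ ℝ) : rep cs w⁻¹ (rep cs w v) = v := by
  rw [← rep_mul_apply, inv_mul_cancel, map_one, LinearEquiv.coe_one, id]

lemma rep_simple_root (i : B) : rep cs (cs.simple i) (root i) = -root i := by
  rw [rep_simple]
  exact reflection_apply_self (coroot_root_self M i)

lemma titsForm_rep (w : W) (u v : B →₀ ℝ) :
    titsForm M (rep cs w u) (rep cs w v) = titsForm M u v := by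
  induction w using cs.simple_induction_left with
  | one => simp
  | mul_simple_left w i ih => rw [rep_mul_apply, rep_mul_apply, rep_simple, titsForm_refl, ih]

lemma simple_injective : Function.Injective cs.simple := by
  classical
  intro i j h
  by_contra hij
  have hneg := rep_simple_root cs i
  rw [h, rep_simple, refl_apply] at hneg
  have := DFunLike.congr_fun hneg i
  norm_num [root_apply, Ne.symm hij] at this

end GeometricRepresentation

/-! ### Positivity -/

section Positivity

variable {B W : Type*} [Group W] {M : CoxeterMatrix B} (cs : CoxeterSystem M W)

open CoxeterSystem (alternatingWord)

lemma rep_alternatingWord (i j : B) (k : ℕ) :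
    rep cs (cs.wordProd (alternatingWord i j k)) (root i) =
      (S ℝ k).eval (2 * cos (π / M i j)) • root (if Even k then i else j) +
        (S ℝ (k - 1)).eval (2 * cos (π / M i j)) • root (if Even k then j else i) := by
  set t := 2 * cos (π / M i j)
  have hij : coroot M i (root j) = -t := by rw [coroot_root, cartan]
  have hji : coroot M j (root i) = -t := by rw [coroot_root, cartan_comm, cartan]
  induction k with
  | zero => simp [alternatingWord]
  | succ k ih =>
    have hS : (S ℝ (k + 1)).eval t = t * (S ℝ k).eval t - (S ℝ (k - 1)).eval t := by
      simp [S_add_one]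
    rw [CoxeterSystem.alternatingWord_succ', cs.wordProd_cons, rep_mul_apply, ih, rep_simple]
    push_cast
    rw [add_sub_cancel_right, hS]
    by_cases hk : Even k
    · simp only [hk, Nat.even_add_one, not_true, if_true, if_false, refl_apply, map_add, map_smul,
        coroot_root_self, hji]
      module
    · simp only [hk, Nat.even_add_one, not_false_iff, if_true, if_false, refl_apply, map_add,
        map_smul, coroot_root_self, hij]
      module

lemma exists_rep_alternatingWord {i j : B} (hij : i ≠ j) {k : ℕ} (hk : M i j ≠ 0 → k < M i j) :
    ∃ p q : ℝ, 0 ≤ p ∧ 0 ≤ q ∧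
      rep cs (cs.wordProd (alternatingWord i j k)) (root i) = p • root i + q • root j := by
  have h1 : M i j ≠ 1 := M.off_diagonal i j hij
  have hp := chebyshevS_eval_two_mul_cos_nonneg h1 (n := k) (by lia) fun h => by exact_mod_cast hk h
  have hq := chebyshevS_eval_two_mul_cos_nonneg h1 (n := k - 1) (by lia) fun h => by
    have := hk h
    lia
  rw [rep_alternatingWord]
  split_ifs
  · exact ⟨_, _, hp, hq, rfl⟩
  · exact ⟨_, _, hq, hp, add_comm _ _⟩

lemma exists_eq_mul_alternatingWord (w : W) (i j : B) :
    ∃ (v : W) (k : ℕ), w = v * cs.wordProd (alternatingWord i j k) ∧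
      cs.length v + k = cs.length w ∧ ¬ cs.IsRightDescent v (if Even k then j else i) := by
  obtain ⟨v, ⟨k, hw, hlen⟩, hmin⟩ := WellFounded.has_min (measure cs.length).wf
    {v | ∃ k, w = v * cs.wordProd (alternatingWord i j k) ∧ cs.length v + k = cs.length w}
    ⟨w, 0, by simp [alternatingWord]⟩
  refine ⟨v, k, hw, hlen, fun hdesc => hmin _ ⟨k + 1, ?_, ?_⟩ hdesc⟩
  · rw [CoxeterSystem.alternatingWord_succ', cs.wordProd_cons, mul_assoc,
      cs.simple_mul_simple_cancel_left, ← hw]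
  · have := cs.isRightDescent_iff.mp hdesc
    lia

variable {cs}

lemma lt_of_not_isRightDescent_mul_alternatingWord {v : W} {i j : B} {k : ℕ}
    (hlen : cs.length v + k = cs.length (v * cs.wordProd (alternatingWord i j k)))
    (hi : ¬ cs.IsRightDescent (v * cs.wordProd (alternatingWord i j k)) i) (hm : M i j ≠ 0) :
    k < M i j := by
  rw [cs.not_isRightDescent_iff, mul_assoc, ← cs.wordProd_concat,
    ← CoxeterSystem.alternatingWord_succ] at hi
  have hred : cs.IsReduced (alternatingWord j i (k + 1)) := by
    have h₁ := cs.length_mul_le v (cs.wordProd (alternatingWord j i (k + 1)))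
    have h₂ := cs.length_wordProd_le (alternatingWord j i (k + 1))
    rw [CoxeterSystem.length_alternatingWord] at h₂
    rw [CoxeterSystem.IsReduced, CoxeterSystem.length_alternatingWord]
    lia
  rw [M.symmetric] at hm ⊢
  by_contra! hle
  exact cs.not_isReduced_alternatingWord j i hm (Nat.lt_succ_of_le hle) hred

lemma not_isRightDescent_of_length_add_eq {v : W} {i : B} {ω : List B}
    (hlen : cs.length v + (i :: ω).length = cs.length (v * cs.wordProd (i :: ω))) :
    ¬ cs.IsRightDescent v i := by
  intro h
  have h₁ := cs.isRightDescent_iff.mp h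
  have h₂ := cs.length_mul_le (v * cs.simple i) (cs.wordProd ω)
  have h₃ := cs.length_wordProd_le ω
  rw [cs.wordProd_cons, ← mul_assoc, List.length_cons] at hlen
  lia

lemma exists_dihedral_decomposition {w : W} {i j : B} (hi : ¬ cs.IsRightDescent w i)
    (hj : cs.IsRightDescent w j) :
    ∃ (v : W) (k : ℕ), w = v * cs.wordProd (alternatingWord i j k) ∧
      cs.length v < cs.length w ∧ (M i j ≠ 0 → k < M i j) ∧
      ¬ cs.IsRightDescent v i ∧ ¬ cs.IsRightDescent v j := by
  obtain ⟨v, k, rfl, hlen, hnext⟩ := exists_eq_mul_alternatingWord cs w i j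
  have hkM := lt_of_not_isRightDescent_mul_alternatingWord hlen hi
  cases k with
  | zero => simp_all [alternatingWord]
  | succ k =>
    have hlast : ¬ cs.IsRightDescent v (if Even k then j else i) := by
      refine not_isRightDescent_of_length_add_eq (ω := alternatingWord i j k) ?_
      rw [← CoxeterSystem.alternatingWord_succ', CoxeterSystem.length_alternatingWord, hlen]
    refine ⟨v, k + 1, rfl, by lia, hkM, ?_⟩
    by_cases hk : Even k <;> simp_all [Nat.even_add_one]

lemma rep_root_nonneg {w : W} {i : B} (hi : ¬ cs.IsRightDescent w i) : 0 ≤ rep cs w (root i) := by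
  induction hn : cs.length w using Nat.strong_induction_on generalizing w i with
  | _ n ih =>
    subst hn
    obtain rfl | hw := eq_or_ne w 1
    · simpa using root_nonneg i
    obtain ⟨j, hj⟩ := cs.exists_rightDescent_of_ne_one hw
    have hij : i ≠ j := by
      rintro rfl
      exact hi hj
    obtain ⟨v, k, hwv, hlt, hk, hvi, hvj⟩ := exists_dihedral_decomposition hi hj
    obtain ⟨p, q, hp, hq, hpq⟩ := exists_rep_alternatingWord cs hij hk
    rw [hwv, rep_mul_apply, hpq, map_add, map_smul, map_smul]
    exact add_nonneg (smul_nonneg hp (ih _ hlt hvi rfl)) (smul_nonneg hq (ih _ hlt hvj rfl))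

lemma rep_root_nonpos {w : W} {i : B} (hi : cs.IsRightDescent w i) : rep cs w (root i) ≤ 0 := by
  have h := rep_root_nonneg (cs.isRightDescent_iff_not_isRightDescent_mul.mp hi)
  rwa [rep_mul_apply, rep_simple_root, map_neg, neg_nonneg] at h

end Positivity

/-! ### Roots -/

section Roots

variable {B W : Type*} [Group W] {M : CoxeterMatrix B}

/-- A root is a vector in the orbit of a simple root. -/
def IsRoot (cs : CoxeterSystem M W) (v : B →₀ ℝ) : Prop := ∃ (w : W) (i : B), rep cs w (root i) = v

/-- The set of positive roots: those with nonnegative coordinates. -/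
def posRoots (cs : CoxeterSystem M W) : Set (B →₀ ℝ) := {v | IsRoot cs v ∧ 0 ≤ v}

variable {cs : CoxeterSystem M W} {v : B →₀ ℝ}

lemma isRoot_root (i : B) : IsRoot cs (root i) := ⟨1, i, by simp⟩

lemma root_mem_posRoots (i : B) : root i ∈ posRoots cs := ⟨isRoot_root i, root_nonneg i⟩

protected lemma IsRoot.rep (hv : IsRoot cs v) (w : W) : IsRoot cs (rep cs w v) := by
  obtain ⟨u, i, rfl⟩ := hv
  exact ⟨w * u, i, rep_mul_apply cs w u _⟩

protected lemma IsRoot.neg (hv : IsRoot cs v) : IsRoot cs (-v) := by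
  obtain ⟨u, i, rfl⟩ := hv
  exact ⟨u * cs.simple i, i, by rw [rep_mul_apply, rep_simple_root, map_neg]⟩

lemma IsRoot.nonneg_or_nonpos (hv : IsRoot cs v) : 0 ≤ v ∨ v ≤ 0 := by
  obtain ⟨u, i, rfl⟩ := hv
  by_cases h : cs.IsRightDescent u i
  · exact Or.inr (rep_root_nonpos h)
  · exact Or.inl (rep_root_nonneg h)

lemma IsRoot.titsForm_self (hv : IsRoot cs v) : titsForm M v v = 2 := by
  obtain ⟨u, i, rfl⟩ := hv
  rw [titsForm_rep, titsForm_root, coroot_root_self]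

lemma IsRoot.ne_zero (hv : IsRoot cs v) : v ≠ 0 := by
  rintro rfl
  simpa using hv.titsForm_self

lemma eq_root_of_forall_ne (hv : v ∈ posRoots cs) {i : B} (hvi : ∀ j ≠ i, v j = 0) :
    v = root i := by
  have hsmul : v = v i • root i := by
    classical
    ext j
    by_cases hj : j = i
    · simp [root_apply, hj]
    · simp [root_apply, hvi j hj, Ne.symm hj]
  have hform : v i * (v i * 2) = 2 := by
    have hnorm (c : ℝ) : titsForm M (c • root i) (c • root i) = c * (c * 2) := by
      simp [titsForm_root, coroot_root_self]
    rw [← hnorm, ← hsmul, hv.1.titsForm_self]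
  have hone : v i = 1 := by nlinarith [show 0 ≤ v i from hv.2 i]
  rw [hsmul, hone, one_smul]

lemma rep_simple_mem_posRoots (hv : v ∈ posRoots cs) {i : B} (hvi : v ≠ root i) :
    rep cs (cs.simple i) v ∈ posRoots cs := by
  classical
  refine ⟨hv.1.rep _, (hv.1.rep _).nonneg_or_nonpos.resolve_right fun hneg => hvi ?_⟩
  refine eq_root_of_forall_ne hv fun j hj => le_antisymm ?_ (hv.2 j)
  simpa [rep_simple, refl_apply, root_apply, hj.symm] using hneg j

variable (cs) in
lemma finite_inversions (w : W) : {v ∈ posRoots cs | ¬ 0 ≤ rep cs w v}.Finite := by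
  induction w using cs.simple_induction_left with
  | one =>
    refine Set.finite_empty.subset ?_
    rintro v ⟨hv, hneg⟩
    exact hneg (by simpa using hv.2)
  | mul_simple_left w i ih =>
    refine (ih.union (Set.finite_singleton (rep cs w⁻¹ (root i)))).subset ?_
    rintro v ⟨hv, hneg⟩
    by_cases hw : 0 ≤ rep cs w v
    · right
      by_contra hne
      refine hneg ?_
      rw [rep_mul_apply]
      refine (rep_simple_mem_posRoots ⟨hv.1.rep w, hw⟩ fun heq => hne ?_).2
      rw [Set.mem_singleton_iff, ← heq, rep_inv_rep]
    · exact Or.inl ⟨hv, hw⟩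

end Roots

/-! ### The dual action -/

section Dominant

variable {B : Type*} {y : Dual ℝ (B →₀ ℝ)}

/-- The functional lies in the closed fundamental chamber. -/
def Dominant (y : Dual ℝ (B →₀ ℝ)) : Prop := ∀ i, 0 ≤ y (root i)

lemma apply_eq_sum (y : Dual ℝ (B →₀ ℝ)) (v : B →₀ ℝ) :
    y v = ∑ i ∈ v.support, v i * y (root i) := by
  conv_lhs => rw [← Finsupp.sum_single v, Finsupp.sum, map_sum]
  refine Finset.sum_congr rfl fun i _ => ?_
  rw [← smul_eq_mul, ← map_smul, root, Finsupp.smul_single_one]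

lemma Dominant.apply_nonneg (hy : Dominant y) {v : B →₀ ℝ} (hv : 0 ≤ v) : 0 ≤ y v := by
  rw [apply_eq_sum]
  exact Finset.sum_nonneg fun i _ => mul_nonneg (hv i) (hy i)

lemma apply_pos_of_forall_pos (hy : ∀ i, 0 < y (root i)) {v : B →₀ ℝ} (hv : 0 ≤ v) (hv0 : v ≠ 0) :
    0 < y v := by
  rw [apply_eq_sum]
  refine Finset.sum_pos (fun i hi => mul_pos ?_ (hy i)) (Finsupp.support_nonempty_iff.mpr hv0)
  exact (hv i).lt_of_ne (Finsupp.mem_support_iff.mp hi).symm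

open Classical in
/-- A standard point in the open face of type `T` of the closed fundamental chamber. -/
noncomputable def facePoint (T : Set B) : Dual ℝ (B →₀ ℝ) :=
  Finsupp.linearCombination ℝ fun i => if i ∈ T then 0 else 1

lemma facePoint_root_of_mem {T : Set B} {i : B} (hi : i ∈ T) : facePoint T (root i) = 0 := by
  simp [facePoint, root, hi]

lemma facePoint_root_of_notMem {T : Set B} {i : B} (hi : i ∉ T) : facePoint T (root i) = 1 := by
  simp [facePoint, root, hi]

lemma facePoint_root_eq_zero_iff {T : Set B} {i : B} : facePoint T (root i) = 0 ↔ i ∈ T :=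
  ⟨fun h => by_contra fun hi => by simp [facePoint_root_of_notMem hi] at h, facePoint_root_of_mem⟩

lemma dominant_facePoint (T : Set B) : Dominant (facePoint T) := by
  intro i
  by_cases hi : i ∈ T
  · exact (facePoint_root_of_mem hi).ge
  · rw [facePoint_root_of_notMem hi]
    exact zero_le_one

end Dominant

section DualAction

variable {B W : Type*} [Group W] {M : CoxeterMatrix B} (cs : CoxeterSystem M W)

/-- The right action `y · w = y ∘ w` on linear functionals. -/
noncomputable def act (y : Dual ℝ (B →₀ ℝ)) (w : W) : Dual ℝ (B →₀ ℝ) :=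
  y ∘ₗ (rep cs w).toLinearMap

lemma act_apply (y : Dual ℝ (B →₀ ℝ)) (w : W) (v : B →₀ ℝ) : act cs y w v = y (rep cs w v) := rfl

lemma act_mul (y : Dual ℝ (B →₀ ℝ)) (u w : W) : act cs y (u * w) = act cs (act cs y u) w :=
  LinearMap.ext fun v => by simp only [act_apply, rep_mul_apply]

lemma act_one (y : Dual ℝ (B →₀ ℝ)) : act cs y 1 = y :=
  LinearMap.ext fun v => by simp [act_apply]

/-- The subgroup fixing a functional. -/
def fixator (y : Dual ℝ (B →₀ ℝ)) : Subgroup W where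
  carrier := {w | act cs y w = y}
  one_mem' := act_one cs y
  mul_mem' {u w} hu hw := by rw [Set.mem_ofPred_eq, act_mul, hu, hw]
  inv_mem' {w} hw := by
    rw [Set.mem_ofPred_eq]
    nth_rw 1 [← hw]
    rw [← act_mul, mul_inv_cancel, act_one]

variable {cs} {y : Dual ℝ (B →₀ ℝ)}

lemma mem_fixator {w : W} : w ∈ fixator cs y ↔ act cs y w = y := Iff.rfl

variable (cs y) in
lemma fixator_eq_conjSubgroup (w : W) :
    fixator cs y = conjSubgroup w (fixator cs (act cs y w)) := by
  have hinj : Function.Injective (act cs · w) :=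
    Function.LeftInverse.injective (g := (act cs · w⁻¹)) fun y => by
      simp only [← act_mul, mul_inv_cancel, act_one]
  ext u
  have hw : w * (w⁻¹ * u * w) = u * w := by group
  rw [mem_conjSubgroup, mem_fixator, mem_fixator, ← act_mul, hw, act_mul]
  exact hinj.eq_iff.symm

lemma simple_mem_fixator {i : B} : cs.simple i ∈ fixator cs y ↔ y (root i) = 0 := by
  rw [mem_fixator]
  constructor <;> intro h
  · have := LinearMap.congr_fun h (root i)
    rw [act_apply, rep_simple_root, map_neg] at this
    linarith
  · refine LinearMap.ext fun v => ?_
    rw [act_apply, rep_simple, refl_apply, map_sub, map_smul, h, smul_zero, sub_zero]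

lemma parabolic_le_fixator {T : Set B} :
    cs.parabolic T ≤ fixator cs y ↔ ∀ i ∈ T, y (root i) = 0 := by
  rw [CoxeterSystem.parabolic, Subgroup.closure_le, Set.image_subset_iff]
  exact forall₂_congr fun i _ => simple_mem_fixator

lemma Dominant.act_root_eq_zero {u : W} (hy : Dominant y) (hyu : Dominant (act cs y u)) {i : B}
    (hi : cs.IsRightDescent u i) : act cs y u (root i) = 0 := by
  refine le_antisymm ?_ (hyu i)
  simpa [act_apply] using hy.apply_nonneg (neg_nonneg.mpr (rep_root_nonpos hi))

lemma Dominant.act_eq_and_mem_parabolic {u : W} (hy : Dominant y) (hyu : Dominant (act cs y u)) :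
    act cs y u = y ∧ u ∈ cs.parabolic {i | y (root i) = 0} := by
  induction hn : cs.length u using Nat.strong_induction_on generalizing u with
  | _ n ih =>
    obtain rfl | hu := eq_or_ne u 1
    · exact ⟨act_one cs y, one_mem _⟩
    obtain ⟨i, hi⟩ := cs.exists_rightDescent_of_ne_one hu
    have hzero := hy.act_root_eq_zero hyu hi
    have hact : act cs y (u * cs.simple i) = act cs y u := by
      rw [act_mul, mem_fixator.mp (simple_mem_fixator.mpr hzero)]
    obtain ⟨hfix, hmem⟩ := ih _ (hn ▸ hi) (hact ▸ hyu) rfl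
    rw [hact] at hfix
    refine ⟨hfix, ?_⟩
    rw [hfix] at hzero
    rw [← cs.simple_mul_simple_cancel_right (w := u) i]
    exact mul_mem hmem (Subgroup.subset_closure ⟨i, hzero, rfl⟩)

lemma Dominant.fixator_eq_parabolic (hy : Dominant y) :
    fixator cs y = cs.parabolic {i | y (root i) = 0} :=
  le_antisymm (fun _ hu => (hy.act_eq_and_mem_parabolic ((mem_fixator.mp hu).symm ▸ hy)).2)
    (parabolic_le_fixator.mpr fun _ hi => hi)

lemma simple_mem_parabolic {T : Set B} {i : B} : cs.simple i ∈ cs.parabolic T ↔ i ∈ T := by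
  have hT : {i | facePoint T (root i) = 0} = T := by ext; exact facePoint_root_eq_zero_iff
  rw [← facePoint_root_eq_zero_iff, ← simple_mem_fixator (cs := cs),
    (dominant_facePoint T).fixator_eq_parabolic, hT]

lemma parabolic_le_parabolic {T U : Set B} : cs.parabolic T ≤ cs.parabolic U ↔ T ⊆ U :=
  ⟨fun h _ hi => simple_mem_parabolic.mp (h (simple_mem_parabolic.mpr hi)),
    fun h => Subgroup.closure_mono (Set.image_mono h)⟩

end DualAction

/-! ### The interior of the Tits cone -/

section Interior

variable {B W : Type*} [Group W] {M : CoxeterMatrix B}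

/-- The functional lies in the interior of the Tits cone: it is positive on all but finitely many
positive roots. -/
def Interior (cs : CoxeterSystem M W) (y : Dual ℝ (B →₀ ℝ)) : Prop :=
  {v ∈ posRoots cs | y v ≤ 0}.Finite

variable {cs : CoxeterSystem M W} {y : Dual ℝ (B →₀ ℝ)}

protected lemma Interior.act (hI : Interior cs y) (w : W) : Interior cs (act cs y w) := by
  refine ((finite_inversions cs w).union (hI.image (rep cs w⁻¹))).subset ?_
  rintro v ⟨hv, hle⟩
  by_cases h : 0 ≤ rep cs w v
  · exact Or.inr ⟨rep cs w v, ⟨⟨hv.1.rep w, h⟩, hle⟩, rep_inv_rep cs w v⟩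
  · exact Or.inl ⟨hv, h⟩

lemma Interior.finite_roots_eq_zero (hI : Interior cs y) : {v | IsRoot cs v ∧ y v = 0}.Finite := by
  refine (hI.union (hI.image Neg.neg)).subset ?_
  rintro v ⟨hv, hzero⟩
  obtain h | h := hv.nonneg_or_nonpos
  · exact Or.inl ⟨⟨hv, h⟩, hzero.le⟩
  · exact Or.inr ⟨-v, ⟨⟨hv.neg, neg_nonneg.mpr h⟩, by simp [hzero]⟩, neg_neg v⟩

lemma Dominant.eq_one_of_mem_fixator (hy : Dominant y) {u : W} (hu : u ∈ fixator cs y)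
    (hroot : ∀ i, y (root i) = 0 → rep cs u (root i) = root i) : u = 1 := by
  by_contra hne
  obtain ⟨i, hi⟩ := cs.exists_rightDescent_of_ne_one hne
  have hzero := hy.act_root_eq_zero ((mem_fixator.mp hu).symm ▸ hy) hi
  rw [mem_fixator.mp hu] at hzero
  have hneg := rep_root_nonpos hi
  rw [hroot i hzero] at hneg
  exact root_ne_zero i (le_antisymm hneg (root_nonneg i))

/-- The fixator acts faithfully on the finite set of roots vanishing at `y`. -/
lemma Interior.finite_fixator (hI : Interior cs y) (hy : Dominant y) : Finite (fixator cs y) := by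
  have := hI.finite_roots_eq_zero.to_subtype
  have hmaps (u : fixator cs y) (v : {v | IsRoot cs v ∧ y v = 0}) :
      IsRoot cs (rep cs u v) ∧ y (rep cs u v) = 0 :=
    ⟨v.2.1.rep u, by rw [← act_apply, mem_fixator.mp u.2, v.2.2]⟩
  refine Finite.of_injective
    (fun u (v : {v | IsRoot cs v ∧ y v = 0}) =>
      (⟨rep cs u v, hmaps u v⟩ : {v | IsRoot cs v ∧ y v = 0})) fun u w huw => ?_
  have hone : (w : W)⁻¹ * u = 1 := by
    refine hy.eq_one_of_mem_fixator (mul_mem (inv_mem w.2) u.2) fun i hi => ?_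
    have hrep : rep cs u (root i) = rep cs w (root i) :=
      congrArg Subtype.val (congrFun huw ⟨root i, isRoot_root i, hi⟩)
    rw [rep_mul_apply, hrep, rep_inv_rep]
  exact Subtype.ext (inv_mul_eq_one.mp hone).symm

lemma Interior.isSpherical (hI : Interior cs y) (hy : Dominant y) :
    cs.IsSpherical {i | y (root i) = 0} := by
  rw [CoxeterSystem.IsSpherical, ← hy.fixator_eq_parabolic]
  exact hI.finite_fixator hy

lemma Interior.ncard_neg_act_simple_lt (hI : Interior cs y) {i : B} (hi : y (root i) < 0) :
    {v ∈ posRoots cs | act cs y (cs.simple i) v < 0}.ncard <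
      {v ∈ posRoots cs | y v < 0}.ncard := by
  have hfin : {v ∈ posRoots cs | y v < 0}.Finite := hI.subset fun v hv => ⟨hv.1, hv.2.le⟩
  have hmem : root i ∈ {v ∈ posRoots cs | y v < 0} := ⟨root_mem_posRoots i, hi⟩
  refine lt_of_le_of_lt ?_ (Set.ncard_sdiff_singleton_lt_of_mem hmem hfin)
  refine Set.ncard_le_ncard_of_injOn (rep cs (cs.simple i)) ?_
    (rep cs (cs.simple i)).injective.injOn (hfin.subset Set.sdiff_subset)
  rintro v ⟨hv, hlt⟩
  have hvi : v ≠ root i := by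
    rintro rfl
    rw [act_apply, rep_simple_root, map_neg] at hlt
    linarith
  refine ⟨⟨rep_simple_mem_posRoots hv hvi, hlt⟩, fun heq => ?_⟩
  have hneg : v = -root i := by
    rw [← rep_simple_root cs i, ← Set.mem_singleton_iff.mp heq, ← rep_mul_apply,
      cs.simple_mul_simple_self, map_one, LinearEquiv.coe_one, id]
  exact root_ne_zero i (le_antisymm (neg_nonneg.mp (hneg ▸ hv.2)) (root_nonneg i))

lemma Interior.exists_dominant (hI : Interior cs y) : ∃ w : W, Dominant (act cs y w) := by
  induction hn : {v ∈ posRoots cs | y v < 0}.ncard using Nat.strong_induction_on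
    generalizing y with
  | _ n ih =>
    by_cases hd : Dominant y
    · exact ⟨1, by rwa [act_one]⟩
    obtain ⟨i, hi⟩ : ∃ i, y (root i) < 0 := by simpa [Dominant] using hd
    obtain ⟨w, hw⟩ := ih _ (hn ▸ hI.ncard_neg_act_simple_lt hi) (hI.act _) rfl
    exact ⟨cs.simple i * w, by rwa [act_mul]⟩

lemma exists_interior_le_fixator (F : Subgroup W) [Finite F] :
    ∃ y : Dual ℝ (B →₀ ℝ), Interior cs y ∧ F ≤ fixator cs y := by
  have := Fintype.ofFinite F
  set y₀ : Dual ℝ (B →₀ ℝ) := facePoint ∅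
  have hpos {v : B →₀ ℝ} (hv : v ∈ posRoots cs) : 0 < y₀ v :=
    apply_pos_of_forall_pos (fun i => by simp [y₀, facePoint_root_of_notMem]) hv.2 hv.1.ne_zero
  have hsum (v : B →₀ ℝ) : (∑ f : F, act cs y₀ f) v = ∑ f : F, y₀ (rep cs f v) := by
    simp [act_apply]
  refine ⟨∑ f : F, act cs y₀ f, ?_, fun g hg => LinearMap.ext fun v => ?_⟩
  · refine (Set.finite_iUnion fun f : F => finite_inversions cs f).subset ?_
    rintro v ⟨hv, hle⟩
    by_contra! hnot
    have hall (f : F) : 0 ≤ rep cs f v := by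
      by_contra hf
      exact hnot (Set.mem_iUnion.mpr ⟨f, hv, hf⟩)
    rw [hsum] at hle
    exact hle.not_gt (Finset.sum_pos (fun f _ => hpos ⟨hv.1.rep f, hall f⟩) ⟨1, Finset.mem_univ _⟩)
  · rw [act_apply, hsum, hsum]
    refine Fintype.sum_equiv (Equiv.mulRight (⟨g, hg⟩ : F)) _ _ fun f => ?_
    simp

end Interior

/-! ### Maximal finite subgroups -/

section MaximalFinite

variable {B W : Type*} [Group W] {M : CoxeterMatrix B} {cs : CoxeterSystem M W} {T : Set B}

variable (cs) in
lemma exists_le_conjSubgroup_parabolic (F : Subgroup W) [Finite F] :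
    ∃ (g : W) (T : Set B), cs.IsSpherical T ∧ F ≤ conjSubgroup g (cs.parabolic T) := by
  obtain ⟨y, hI, hF⟩ := exists_interior_le_fixator (cs := cs) F
  obtain ⟨w, hw⟩ := hI.exists_dominant
  refine ⟨w, _, (hI.act w).isSpherical hw, ?_⟩
  rwa [← hw.fixator_eq_parabolic, ← fixator_eq_conjSubgroup]

/-- If `y` were nonpositive at a simple root outside `T`, then on the way from `y` towards the open
face of type `T`, the first point of the closed chamber would have a finite fixator generated by a
set larger than `T`. -/
lemma Interior.apply_root_pos {y : Dual ℝ (B →₀ ℝ)} (hI : Interior cs y) (hT : cs.IsMaxSpherical T)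
    (hzero : ∀ i ∈ T, y (root i) = 0) {i : B} (hi : i ∉ T) : 0 < y (root i) := by
  by_contra! hle
  have hfin : {i | i ∉ T ∧ y (root i) ≤ 0}.Finite :=
    (hI.preimage root_injective.injOn).subset fun i hi => ⟨root_mem_posRoots i, hi.2⟩
  obtain ⟨k, ⟨hkT, hk⟩, hmin⟩ := Set.exists_min_image _ (fun i => y (root i)) hfin ⟨i, hi, hle⟩
  set z : Dual ℝ (B →₀ ℝ) := y - y (root k) • facePoint T with hz
  have hz_apply (v : B →₀ ℝ) : z v = y v - y (root k) * facePoint T v := by simp [hz]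
  have hz_mem {j : B} (hj : j ∈ T) : z (root j) = 0 := by
    rw [hz_apply, hzero j hj, facePoint_root_of_mem hj, mul_zero, sub_zero]
  have hz_notMem {j : B} (hj : j ∉ T) : z (root j) = y (root j) - y (root k) := by
    rw [hz_apply, facePoint_root_of_notMem hj, mul_one]
  have hz_dominant : Dominant z := fun j => by
    by_cases hj : j ∈ T
    · exact (hz_mem hj).ge
    · rw [hz_notMem hj, sub_nonneg]
      obtain hneg | hpos := le_total (y (root j)) 0
      · exact hmin j ⟨hj, hneg⟩
      · exact hk.trans hpos
  have hz_interior : Interior cs z := Set.Finite.subset hI fun v ⟨hv, hzv⟩ => ⟨hv, by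
    rw [hz_apply] at hzv
    nlinarith [(dominant_facePoint T).apply_nonneg hv.2]⟩
  have hz_zeros : {j | z (root j) = 0} = T :=
    hT.2 _ (hz_interior.isSpherical hz_dominant) fun j hj => hz_mem hj
  exact hkT (hz_zeros ▸ (by simp [hz_notMem hkT] : k ∈ {j | z (root j) = 0}))

lemma Interior.dominant_and_eq {y : Dual ℝ (B →₀ ℝ)} (hI : Interior cs y)
    (hT : cs.IsMaxSpherical T) (hle : cs.parabolic T ≤ fixator cs y) :
    Dominant y ∧ {i | y (root i) = 0} = T := by
  have hzero := parabolic_le_fixator.mp hle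
  have hpos (i : B) (hi : i ∉ T) := hI.apply_root_pos hT hzero hi
  refine ⟨fun i => ?_, Set.Subset.antisymm (fun i hi => by_contra fun hiT => ?_) hzero⟩
  · by_cases hi : i ∈ T
    · exact (hzero i hi).ge
    · exact (hpos i hi).le
  · exact (hpos i hiT).ne' hi

lemma maximal_finite_parabolic (hT : cs.IsMaxSpherical T) :
    Maximal (fun H : Subgroup W => Finite H) (cs.parabolic T) := by
  refine ⟨hT.1, fun K hK hle => ?_⟩
  have : Finite K := hK
  obtain ⟨y, hI, hKy⟩ := exists_interior_le_fixator (cs := cs) K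
  obtain ⟨hy, hzeros⟩ := hI.dominant_and_eq hT (hle.trans hKy)
  rwa [hy.fixator_eq_parabolic, hzeros] at hKy

variable (cs) in
lemma exists_eq_conjSubgroup_parabolic {F : Subgroup W}
    (hF : Maximal (fun H : Subgroup W => Finite H) F) :
    ∃ (g : W) (T : Set B), cs.IsMaxSpherical T ∧ F = conjSubgroup g (cs.parabolic T) := by
  have : Finite F := hF.prop
  obtain ⟨g, T, hT, hle⟩ := exists_le_conjSubgroup_parabolic cs F
  have heq {U : Set B} (hU : cs.IsSpherical U) (hTU : T ⊆ U) :
      F = conjSubgroup g (cs.parabolic U) := by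
    have : Finite (cs.parabolic U) := hU
    exact hF.eq_of_le (finite_conjSubgroup g _)
      (hle.trans (conjSubgroup_le_conjSubgroup.mpr (parabolic_le_parabolic.mpr hTU)))
  refine ⟨g, T, ⟨hT, fun U hU hTU => Set.Subset.antisymm ?_ hTU⟩, heq hT subset_rfl⟩
  rw [← parabolic_le_parabolic (cs := cs), ← conjSubgroup_le_conjSubgroup (g := g),
    ← heq hU hTU]
  exact hle

lemma eq_of_parabolic_eq_conjSubgroup {T₁ T₂ : Set B} (h₁ : cs.IsMaxSpherical T₁)
    (h₂ : cs.IsMaxSpherical T₂) {g : W}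
    (hconj : cs.parabolic T₁ = conjSubgroup g (cs.parabolic T₂)) : T₁ = T₂ := by
  have : Finite (cs.parabolic T₁) := h₁.1
  obtain ⟨y, hI, hle⟩ := exists_interior_le_fixator (cs := cs) (cs.parabolic T₁)
  obtain ⟨hy, rfl⟩ := hI.dominant_and_eq h₁ hle
  rw [hconj, fixator_eq_conjSubgroup cs y g, conjSubgroup_le_conjSubgroup] at hle
  obtain ⟨hyg, rfl⟩ := (hI.act g).dominant_and_eq h₂ hle
  rw [(hy.act_eq_and_mem_parabolic hyg).1]

lemma exists_injOn_conj_parabolic {B' : Type*} {M' : CoxeterMatrix B'} (cs : CoxeterSystem M W)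
    (cs' : CoxeterSystem M' W) :
    ∃ f : Set B' → Set B, Set.InjOn f {T' | cs'.IsMaxSpherical T'} ∧
      ∀ T', cs'.IsMaxSpherical T' → cs.IsMaxSpherical (f T') ∧
        ∃ g, cs'.parabolic T' = conjSubgroup g (cs.parabolic (f T')) := by
  have hex (T' : Set B') (hT' : cs'.IsMaxSpherical T') :=
    exists_eq_conjSubgroup_parabolic cs (maximal_finite_parabolic hT')
  choose! g f hf hconj using hex
  refine ⟨f, fun T₁ h₁ T₂ h₂ heq => ?_, fun T' hT' => ⟨hf T' hT', g T', hconj T' hT'⟩⟩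
  refine eq_of_parabolic_eq_conjSubgroup h₁ h₂ (g := g T₁ * (g T₂)⁻¹) ?_
  rw [← conjSubgroup_conjSubgroup, hconj T₂ h₂, conjSubgroup_inv_conjSubgroup, ← heq,
    hconj T₁ h₁]

end MaximalFinite

/-! ### Odd edges -/

section Involutions

variable {G : Type*} [Group G] {a b x : G}

lemma mem_zpowers_or_of_mem_closure_pair (ha : a * a = 1) (hb : b * b = 1)
    (hx : x ∈ Subgroup.closure {a, b}) :
    x ∈ Subgroup.zpowers (a * b) ∨ x * a ∈ Subgroup.zpowers (a * b) := by
  have ha' : a⁻¹ = a := inv_eq_of_mul_eq_one_right ha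
  have hb' : b⁻¹ = b := inv_eq_of_mul_eq_one_right hb
  have hba : b * a ∈ Subgroup.zpowers (a * b) := by
    simpa [ha', hb'] using inv_mem (Subgroup.mem_zpowers (a * b))
  have hmul {x y : G} (hy : y = a ∨ y = b)
      (hx : x ∈ Subgroup.zpowers (a * b) ∨ x * a ∈ Subgroup.zpowers (a * b)) :
      x * y ∈ Subgroup.zpowers (a * b) ∨ x * y * a ∈ Subgroup.zpowers (a * b) := by
    obtain rfl | rfl := hy
    · simpa [mul_assoc, ha, or_comm] using hx
    · refine hx.symm.imp (fun hx => ?_) fun hx => ?_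
      · simpa [mul_assoc, ha, ← mul_assoc a a] using mul_mem hx (Subgroup.mem_zpowers (a * y))
      · simpa [mul_assoc] using mul_mem hx hba
  induction hx using Subgroup.closure_induction_right with
  | one => exact Or.inl (one_mem _)
  | mul_right x _ y hy ih => exact hmul hy ih
  | mul_inv_cancel x _ y hy ih =>
    exact hmul (hy.imp (by rintro rfl; exact ha') (by rintro rfl; exact hb')) ih

lemma finite_closure_pair (ha : a * a = 1) (hb : b * b = 1) (hab : orderOf (a * b) ≠ 0) :
    Finite (Subgroup.closure {a, b}) := by
  have hfin : (Subgroup.zpowers (a * b) : Set G).Finite :=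
    finite_zpowers.mpr (orderOf_ne_zero_iff.mp hab)
  refine ((hfin.union (hfin.preimage (mul_left_injective a).injOn)).subset ?_).to_subtype
  exact fun x hx => mem_zpowers_or_of_mem_closure_pair ha hb hx

lemma eq_neg_one_of_mem_closure_pair {χ : G →* ℤˣ} (ha : a * a = 1) (hb : b * b = 1)
    (hab : Odd (orderOf (a * b))) (hχa : χ a = -1) (hχb : χ b = -1)
    (hx : x ∈ Subgroup.closure {a, b}) (hxx : x * x = 1) (hx1 : x ≠ 1) : χ x = -1 := by
  have hker : Subgroup.zpowers (a * b) ≤ χ.ker := by simp [MonoidHom.mem_ker, hχa, hχb]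
  obtain hrot | hrefl := mem_zpowers_or_of_mem_closure_pair ha hb hx
  · have hodd : Odd (orderOf x) := hab.of_dvd_nat (orderOf_dvd_of_mem_zpowers hrot)
    have hdvd : orderOf x ∣ 2 := orderOf_dvd_of_pow_eq_one (by rw [sq, hxx])
    exact absurd (orderOf_eq_one_iff.mp (hodd.coprime_two_right.eq_one_of_dvd hdvd)) hx1
  · simpa [MonoidHom.mem_ker, hχa, neg_eq_iff_eq_neg] using hker hrefl

end Involutions

section OddEdges

variable {B W : Type*} [Group W] {M : CoxeterMatrix B} {cs : CoxeterSystem M W} {T : Set B}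

lemma parabolic_pair (i j : B) :
    cs.parabolic {i, j} = Subgroup.closure {cs.simple i, cs.simple j} := by
  rw [CoxeterSystem.parabolic, Set.image_pair]

lemma isSpherical_pair {i j : B} (hij : orderOf (cs.simple i * cs.simple j) ≠ 0) :
    cs.IsSpherical {i, j} := by
  rw [CoxeterSystem.IsSpherical, parabolic_pair]
  exact finite_closure_pair (cs.simple_mul_simple_self i) (cs.simple_mul_simple_self j) hij

lemma orderOf_ne_zero_of_isSpherical (hT : cs.IsSpherical T) {i j : B} (hi : i ∈ T) (hj : j ∈ T) :
    orderOf (cs.simple i * cs.simple j) ≠ 0 := by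
  have : Finite (cs.parabolic T) := hT
  have hmem := mul_mem (simple_mem_parabolic (cs := cs).mpr hi) (simple_mem_parabolic.mpr hj)
  rw [← Subgroup.orderOf_mk _ hmem]
  exact (orderOf_pos _).ne'

lemma commute_simple_iff {i j : B} :
    Commute (cs.simple i) (cs.simple j) ↔ orderOf (cs.simple i * cs.simple j) ∣ 2 := by
  rw [orderOf_dvd_iff_pow_eq_one, sq, mul_eq_one_iff_eq_inv, mul_inv_rev, cs.inv_simple,
    cs.inv_simple, commute_iff_eq]

lemma not_commute_simple {i j : B} (hij : i ≠ j)
    (hodd : Odd (orderOf (cs.simple i * cs.simple j))) :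
    ¬ Commute (cs.simple i) (cs.simple j) := fun hcomm => by
  have hone := hodd.coprime_two_right.eq_one_of_dvd (commute_simple_iff.mp hcomm)
  rw [orderOf_eq_one_iff, mul_eq_one_iff_eq_inv, cs.inv_simple] at hone
  exact hij (simple_injective cs hone)

lemma exists_odd_of_not_commute
    (h0 : ∀ i j : B, orderOf (cs.simple i * cs.simple j) ≠ 0 →
      Even (orderOf (cs.simple i * cs.simple j)) → orderOf (cs.simple i * cs.simple j) = 2)
    (hT : cs.IsSpherical T) {x y : W} (hx : x ∈ cs.parabolic T) (hy : y ∈ cs.parabolic T)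
    (hxy : ¬ Commute x y) :
    ∃ i ∈ T, ∃ j ∈ T, i ≠ j ∧ Odd (orderOf (cs.simple i * cs.simple j)) := by
  obtain ⟨i, hi, j, hj, hij⟩ : ∃ i ∈ T, ∃ j ∈ T, ¬ Commute (cs.simple i) (cs.simple j) := by
    by_contra! hcomm
    have := Subgroup.isMulCommutative_closure (k := cs.simple '' T) <| by
      rintro _ ⟨i, hi, rfl⟩ _ ⟨j, hj, rfl⟩
      exact hcomm i hi j hj
    exact hxy (congrArg Subtype.val
      (mul_comm' (⟨x, hx⟩ : Subgroup.closure (cs.simple '' T)) ⟨y, hy⟩))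
  refine ⟨i, hi, j, hj, fun h => hij (h ▸ Commute.refl _), Nat.not_even_iff_odd.mp fun heven => ?_⟩
  have horder := orderOf_ne_zero_of_isSpherical hT hi hj
  exact hij (commute_simple_iff.mpr (h0 i j horder heven).dvd)

lemma exists_odd_le_conjSubgroup_parabolic_pair
    (h0 : ∀ i j : B, orderOf (cs.simple i * cs.simple j) ≠ 0 →
      Even (orderOf (cs.simple i * cs.simple j)) → orderOf (cs.simple i * cs.simple j) = 2)
    (h1 : ∀ i j : B, i ≠ j → Odd (orderOf (cs.simple i * cs.simple j)) →
      cs.IsMaxSpherical {i, j})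
    {F : Subgroup W} [Finite F] {x y : W} (hx : x ∈ F) (hy : y ∈ F) (hxy : ¬ Commute x y) :
    ∃ (g : W) (i j : B), i ≠ j ∧ Odd (orderOf (cs.simple i * cs.simple j)) ∧
      F ≤ conjSubgroup g (cs.parabolic {i, j}) := by
  obtain ⟨g, T, hT, hle⟩ := exists_le_conjSubgroup_parabolic cs F
  have hxy' : ¬ Commute (g⁻¹ * x * g) (g⁻¹ * y * g) := by
    simpa using (Commute.conj_iff g⁻¹).not.mpr hxy
  obtain ⟨i, hi, j, hj, hij, hodd⟩ := exists_odd_of_not_commute h0 hT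
    (mem_conjSubgroup.mp (hle hx)) (mem_conjSubgroup.mp (hle hy)) hxy'
  have hpair : T = {i, j} := (h1 i j hij hodd).2 T hT (Set.pair_subset hi hj)
  exact ⟨g, i, j, hij, hodd, hpair ▸ hle⟩

lemma even_of_mem_of_notMem
    (h2 : ¬ ∃ i j k : B, i ≠ j ∧ j ≠ k ∧ i ≠ k ∧
      Odd (orderOf (cs.simple i * cs.simple j)) ∧ Odd (orderOf (cs.simple j * cs.simple k)))
    {i j : B} (hij : i ≠ j) (hodd : Odd (orderOf (cs.simple i * cs.simple j))) {k l : B}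
    (hk : k ∈ ({i, j} : Set B)) (hl : l ∉ ({i, j} : Set B)) : Even (M k l) := by
  by_contra hM
  have hkl : Odd (orderOf (cs.simple k * cs.simple l)) :=
    (Nat.not_even_iff_odd.mp hM).of_dvd_nat
      (orderOf_dvd_of_pow_eq_one (cs.simple_mul_simple_pow k l))
  simp only [Set.mem_insert_iff, Set.mem_singleton_iff, not_or] at hl
  obtain rfl | rfl := hk
  · have hji : Odd (orderOf (cs.simple j * cs.simple k)) := by
      rwa [← orderOf_inv, mul_inv_rev, cs.inv_simple, cs.inv_simple]
    exact h2 ⟨j, k, l, hij.symm, Ne.symm hl.1, Ne.symm hl.2, hji, hkl⟩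
  · exact h2 ⟨i, k, l, hij, Ne.symm hl.2, Ne.symm hl.1, hodd, hkl⟩

variable (cs) in
lemma exists_signCharacter (hT : ∀ k ∈ T, ∀ l ∉ T, Even (M k l)) :
    ∃ χ : W →* ℤˣ, (∀ k ∈ T, χ (cs.simple k) = -1) ∧ ∀ k ∉ T, χ (cs.simple k) = 1 := by
  classical
  have hlift : M.IsLiftable (fun k => if k ∈ T then (-1 : ℤˣ) else 1) := fun k l => by
    by_cases hk : k ∈ T <;> by_cases hl : l ∈ T
    · simp [hk, hl]
    · simp [hk, hl, (hT k hk l hl).neg_one_pow]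
    · simp [hk, hl, M.symmetric k l, (hT l hl k hk).neg_one_pow]
    · simp [hk, hl]
  refine ⟨cs.lift ⟨_, hlift⟩, fun k hk => ?_, fun k hk => ?_⟩ <;>
    simp [cs.lift_apply_simple hlift, hk]

lemma exists_apply_simple_ne_one {A : Type*} [Group A] {χ : W →* A} {g x : W}
    (hx : x ∈ conjSubgroup g (cs.parabolic T)) (hχ : χ x ≠ 1) :
    ∃ k ∈ T, χ (cs.simple k) ≠ 1 := by
  by_contra! htriv
  have hker : cs.parabolic T ≤ χ.ker := by
    simpa [CoxeterSystem.parabolic, Subgroup.closure_le, Set.subset_def] using htriv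
  have hconj := χ.normal_ker.conj_mem _ (hker (mem_conjSubgroup.mp hx)) g
  exact hχ (by simpa [mul_assoc, MonoidHom.mem_ker] using hconj)

lemma eq_neg_one_of_mem_conjSubgroup_parabolic_pair {χ : W →* ℤˣ} {i j : B}
    (hodd : Odd (orderOf (cs.simple i * cs.simple j)))
    (hχ : ∀ k ∈ ({i, j} : Set B), χ (cs.simple k) = -1)
    {g x : W} (hx : x ∈ conjSubgroup g (cs.parabolic {i, j})) (hxx : x * x = 1) (hx1 : x ≠ 1) :
    χ x = -1 := by
  rw [mem_conjSubgroup, parabolic_pair] at hx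
  have hconj := eq_neg_one_of_mem_closure_pair (χ := χ) (cs.simple_mul_simple_self i)
    (cs.simple_mul_simple_self j) hodd (hχ i (by simp)) (hχ j (by simp)) hx
    (by simp [mul_assoc, ← mul_assoc x x, hxx])
    (by simpa [mul_assoc, inv_mul_eq_one, eq_comm] using hx1)
  simpa [mul_right_comm] using hconj

lemma simple_ne_one (i : B) : cs.simple i ≠ 1 := fun h => by
  simpa [h] using cs.length_simple i

lemma exists_odd_encard_le {B' : Type*} {M' : CoxeterMatrix B'} (cs : CoxeterSystem M W)
    (cs' : CoxeterSystem M' W)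
    (h0 : ∀ i j : B, orderOf (cs.simple i * cs.simple j) ≠ 0 →
      Even (orderOf (cs.simple i * cs.simple j)) → orderOf (cs.simple i * cs.simple j) = 2)
    (h1 : ∀ i j : B, i ≠ j → Odd (orderOf (cs.simple i * cs.simple j)) →
      cs.IsMaxSpherical {i, j})
    (h2 : ¬ ∃ i j k : B, i ≠ j ∧ j ≠ k ∧ i ≠ k ∧
      Odd (orderOf (cs.simple i * cs.simple j)) ∧ Odd (orderOf (cs.simple j * cs.simple k)))
    {i' j' : B'} (hij' : i' ≠ j') (hodd' : Odd (orderOf (cs'.simple i' * cs'.simple j'))) :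
    ∃ i j : B, i ≠ j ∧ Odd (orderOf (cs.simple i * cs.simple j)) ∧
      {T' : Set B' | cs'.IsMaxSpherical T' ∧ (T' ∩ {i', j'}).Nonempty}.encard ≤
        {T : Set B | cs.IsMaxSpherical T ∧ (T ∩ {i, j}).Nonempty}.encard := by
  have : Finite (cs'.parabolic {i', j'}) := isSpherical_pair hodd'.pos.ne'
  obtain ⟨g, i, j, hij, hodd, hle⟩ := exists_odd_le_conjSubgroup_parabolic_pair h0 h1
    (simple_mem_parabolic (cs := cs').mpr (by simp : i' ∈ ({i', j'} : Set B')))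
    (simple_mem_parabolic.mpr (by simp)) (not_commute_simple hij' hodd')
  refine ⟨i, j, hij, hodd, ?_⟩
  obtain ⟨χ, hχ, hχ'⟩ := exists_signCharacter cs (T := {i, j}) fun _ hk _ hl =>
    even_of_mem_of_notMem h2 hij hodd hk hl
  have hχ_simple (k : B') (hk : k ∈ ({i', j'} : Set B')) : χ (cs'.simple k) = -1 :=
    eq_neg_one_of_mem_conjSubgroup_parabolic_pair hodd hχ (hle (simple_mem_parabolic.mpr hk))
      (cs'.simple_mul_simple_self k) (simple_ne_one k)
  obtain ⟨f, hinj, hf⟩ := exists_injOn_conj_parabolic cs cs'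
  refine Set.encard_le_encard_of_injOn (f := f) ?_ (hinj.mono fun T' hT' => hT'.1)
  rintro T' ⟨hT', k', hk'T, hk'⟩
  obtain ⟨hfT', g', hconj⟩ := hf T' hT'
  obtain ⟨k, hkT, hk⟩ := exists_apply_simple_ne_one (χ := χ)
    (hconj ▸ simple_mem_parabolic.mpr hk'T) (by simp [hχ_simple k' hk'])
  exact ⟨hfT', k, hkT, by_contra fun hkij => hk (hχ' k hkij)⟩

end OddEdges

section Transport

variable {B W H : Type*} [Group W] [Group H] {M : CoxeterMatrix B} (cs : CoxeterSystem M W)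
  (e : W ≃* H) {T : Set B}

lemma parabolic_map (T : Set B) :
    (cs.map e).parabolic T = (cs.parabolic T).map e.toMonoidHom := by
  rw [CoxeterSystem.parabolic, CoxeterSystem.parabolic, MonoidHom.map_closure, ← Set.image_comp]
  rfl

variable {cs} in
lemma isSpherical_map_iff : (cs.map e).IsSpherical T ↔ cs.IsSpherical T := by
  rw [CoxeterSystem.IsSpherical, parabolic_map]
  exact ((cs.parabolic T).equivMapOfInjective e.toMonoidHom e.injective).finite_iff.symm

variable {cs} in
lemma isMaxSpherical_map_iff : (cs.map e).IsMaxSpherical T ↔ cs.IsMaxSpherical T := by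
  simp only [CoxeterSystem.IsMaxSpherical, isSpherical_map_iff]

end Transport

end CoxeterGroup

theorem condition_three_transfers_general {B B' W W' : Type*} [Group W] [Group W']
    {M : CoxeterMatrix B} (cs : CoxeterSystem M W)
    {M' : CoxeterMatrix B'} (cs' : CoxeterSystem M' W')
    (h0 : ∀ i j : B, orderOf (cs.simple i * cs.simple j) ≠ 0 →
      Even (orderOf (cs.simple i * cs.simple j)) → orderOf (cs.simple i * cs.simple j) = 2)
    (h1 : ∀ i j : B, i ≠ j → Odd (orderOf (cs.simple i * cs.simple j)) →
      cs.IsMaxSpherical {i, j})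
    (h2 : ¬ ∃ i j k : B, i ≠ j ∧ j ≠ k ∧ i ≠ k ∧
      Odd (orderOf (cs.simple i * cs.simple j)) ∧ Odd (orderOf (cs.simple j * cs.simple k)))
    (φ : W ≃* W') {i' j' : B'} (hij' : i' ≠ j')
    (hodd' : Odd (orderOf (cs'.simple i' * cs'.simple j'))) :
    ∃ i j : B, i ≠ j ∧ Odd (orderOf (cs.simple i * cs.simple j)) ∧
      {T' : Set B' | cs'.IsMaxSpherical T' ∧ (T' ∩ {i', j'}).Nonempty}.encard ≤
        {T : Set B | cs.IsMaxSpherical T ∧ (T ∩ {i, j}).Nonempty}.encard := by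
  have hodd : Odd (orderOf ((cs'.map φ.symm).simple i' * (cs'.map φ.symm).simple j')) := by
    rwa [CoxeterSystem.map_simple, CoxeterSystem.map_simple, ← map_mul, φ.symm.orderOf_eq]
  simpa only [CoxeterGroup.isMaxSpherical_map_iff] using
    CoxeterGroup.exists_odd_encard_le cs (cs'.map φ.symm) h0 h1 h2 hij' hodd

/-- Conditions (0)–(3) on `(W,S)` transfer through an isomorphism `φ : W → W'`:
the target system satisfies (3'): if `s' ≠ t'` and `m'(s',t')` is odd then the number of
maximal spherical subsets of `S'` meeting `{s',t'}` is at most two. -/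
theorem condition_three_transfers {B B' : Type*} [Fintype B] [Fintype B']
    {W W' : Type*} [Group W] [Group W']
    {M : CoxeterMatrix B} (cs : CoxeterSystem M W)
    {M' : CoxeterMatrix B'} (cs' : CoxeterSystem M' W')
    (h0 : ∀ i j : B, orderOf (cs.simple i * cs.simple j) ≠ 0 →
      Even (orderOf (cs.simple i * cs.simple j)) → orderOf (cs.simple i * cs.simple j) = 2)
    (h1 : ∀ i j : B, i ≠ j → Odd (orderOf (cs.simple i * cs.simple j)) →
      cs.IsMaxSpherical {i, j})
    (h2 : ¬ ∃ i j k : B, i ≠ j ∧ j ≠ k ∧ i ≠ k ∧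
      Odd (orderOf (cs.simple i * cs.simple j)) ∧ Odd (orderOf (cs.simple j * cs.simple k)))
    (h3 : ∀ i j : B, i ≠ j → Odd (orderOf (cs.simple i * cs.simple j)) →
      {T : Set B | cs.IsMaxSpherical T ∧ (T ∩ {i, j}).Nonempty}.ncard ≤ 2)
    (φ : W ≃* W') :
    ∀ i' j' : B', i' ≠ j' → Odd (orderOf (cs'.simple i' * cs'.simple j')) →
      {T' : Set B' | cs'.IsMaxSpherical T' ∧ (T' ∩ {i', j'}).Nonempty}.ncard ≤ 2 := by
  intro i' j' hij' hodd'
  obtain ⟨i, j, hij, hodd, hle⟩ :=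
    condition_three_transfers_general cs cs' h0 h1 h2 φ hij' hodd'
  exact (ENat.toNat_le_toNat hle (Set.toFinite _).encard_lt_top.ne).trans (h3 i j hij hodd)
end

section
/- Let (W,S) be a Coxeter system satisfying: (0) for all s,t ∈ S with m(s,t) even, m(s,t) = 2; (1) for all s ≠ t ∈ S with m(s,t) odd, {s,t} is a maximal spherical subset of S; (2) there is no three-element subset {s,t,u} ⊆ S such that m(s,t) and m(t,u) are both odd; (3) for all s ≠ t ∈ S with m(s,t) odd, the number of maximal spherical subsets of S intersecting {s,t} is at most two. Let (W',S') be a Coxeter system, let φ : W → W' be a group isomorphism, let T_1, …, T_k be maximal spherical subsets of S and T'_1, …, T'_k be maximal spherical subsets of S' such that for each i, φ(W_{T_i}) is conjugate in W' to W'_{T'_i} and W_{T_i} ≅ (ℤ/2ℤ)^{|T_i|}. Then |T_1 ∩ ⋯ ∩ T_k| = |T'_1 ∩ ⋯ ∩ T'_k|. -/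
namespace Coxeter

open Real

/-! ### The geometric representation -/

section Reflections

open Polynomial.Chebyshev

variable {V : Type*} [AddCommGroup V] [Module ℝ V] {x y : V} {f g : Module.Dual ℝ V}

/-- Both coefficients in `Module.reflection_mul_reflection_pow_apply` contain the factor
`S_{k-1} = 0` if `m = 2k`, and the factor `S_k + S_{k-1} = 0` if `m = 2k + 1`, where
`S_n = sin ((n + 1) θ) / sin θ` with `θ = 2π / m`. -/
lemma reflection_mul_reflection_pow_eq_one (hf : f x = 2) (hg : g y = 2) {m : ℕ} (hm : 2 < m)
    (hfg : f y * g x = 4 * cos (π / m) ^ 2) :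
    (Module.reflection hf * Module.reflection hg) ^ m = 1 := by
  have hm' : (2 : ℝ) < m := by exact_mod_cast hm
  obtain ⟨θ, hθ⟩ : ∃ θ, m * θ = 2 * π := ⟨2 * π / m, mul_div_cancel₀ _ (by positivity)⟩
  have hθm : θ / 2 = π / m := by field_simp; linarith
  have hsin : sin θ ≠ 0 := (sin_pos_of_pos_of_lt_pi (by nlinarith [pi_pos])
    (by nlinarith [pi_pos])).ne'
  have ht : 2 * cos θ = f y * g x - 2 := by
    rw [hfg, ← hθm, ← mul_div_cancel₀ θ (two_ne_zero' ℝ), cos_two_mul,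
      mul_div_cancel₀ θ two_ne_zero]
    ring
  ext z
  rw [Module.reflection_mul_reflection_pow_apply hf hg m z _ ht]
  obtain ⟨k, rfl | rfl⟩ := m.even_or_odd'
  · have hS : (S ℝ (k - 1)).eval (2 * cos θ) = 0 := by
      apply (mul_eq_zero_iff_right hsin).1
      rw [S_two_mul_real_cos, ← sin_pi]
      congr 1
      push_cast at hθ ⊢
      linarith
    have h1 : ((2 * k : ℕ) - 1 : ℤ) / 2 = k - 1 := by lia
    have h2 : ((2 * k : ℕ) - 2 : ℤ) / 2 = k - 1 := by lia
    rw [h1, h2, hS]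
    simp
  · have hS : (S ℝ k).eval (2 * cos θ) + (S ℝ (k - 1)).eval (2 * cos θ) = 0 := by
      apply (mul_eq_zero_iff_right hsin).1
      rw [add_mul, S_two_mul_real_cos, S_two_mul_real_cos, ← neg_eq_iff_add_eq_zero,
        ← sin_two_pi_sub, ← hθ]
      congr 1
      push_cast
      ring
    have h1 : ((2 * k + 1 : ℕ) - 1 : ℤ) / 2 = k := by lia
    have h2 : ((2 * k + 1 : ℕ) - 2 : ℤ) / 2 = k - 1 := by lia
    have h3 : ((2 * k + 1 : ℕ) - 3 : ℤ) / 2 = k - 1 := by lia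
    have h4 : ((2 * k + 1 : ℕ) : ℤ) / 2 = k := by lia
    rw [h1, h2, h3, h4, hS]
    simp

lemma commute_reflection (hf : f x = 2) (hg : g y = 2) (hfy : f y = 0) (hgx : g x = 0) :
    Commute (Module.reflection hf) (Module.reflection hg) := by
  ext z
  simp only [LinearEquiv.mul_apply, Module.reflection_apply, map_sub, map_smul, hfy, hgx]
  module

end Reflections

variable {B W : Type*} [Group W]

/-- The simple root indexed by `i`. -/
noncomputable abbrev simpleRoot (i : B) : B →₀ ℝ := Finsupp.single i 1

/-- The symmetric bilinear form of the geometric representation.  For `M i j = 0`, which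
encodes `∞`, the convention `π / 0 = 0` gives the usual value `-1`. -/
noncomputable def form (M : CoxeterMatrix B) : LinearMap.BilinForm ℝ (B →₀ ℝ) :=
  Finsupp.linearCombination ℝ fun i ↦ Finsupp.linearCombination ℝ fun j ↦ -cos (π / M i j)

lemma form_simpleRoot_simpleRoot (M : CoxeterMatrix B) (i j : B) :
    form M (simpleRoot i) (simpleRoot j) = -cos (π / M i j) := by
  simp [form]

lemma form_simpleRoot_self (M : CoxeterMatrix B) (i : B) :
    form M (simpleRoot i) (simpleRoot i) = 1 := by
  simp [form_simpleRoot_simpleRoot]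

lemma form_symm (M : CoxeterMatrix B) (x y : B →₀ ℝ) : form M x y = form M y x := by
  suffices h : form M = (form M).flip from LinearMap.congr_fun₂ h x y
  ext i j
  simp [form, M.symmetric j i]

lemma two_smul_form_simpleRoot_self (M : CoxeterMatrix B) (i : B) :
    ((2 : ℝ) • form M (simpleRoot i)) (simpleRoot i) = 2 := by
  simp [form_simpleRoot_self]

/-- The orthogonal reflection in a simple root. -/
noncomputable def simpleReflection (M : CoxeterMatrix B) (i : B) : (B →₀ ℝ) ≃ₗ[ℝ] (B →₀ ℝ) :=
  Module.reflection (two_smul_form_simpleRoot_self M i)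

lemma simpleReflection_apply (M : CoxeterMatrix B) (i : B) (x : B →₀ ℝ) :
    simpleReflection M i x = x - (2 * form M (simpleRoot i) x) • simpleRoot i := by
  simp [simpleReflection, Module.reflection_apply]

lemma simpleReflection_simpleRoot_self (M : CoxeterMatrix B) (i : B) :
    simpleReflection M i (simpleRoot i) = -simpleRoot i :=
  Module.reflection_apply_self _

lemma simpleReflection_mul_self (M : CoxeterMatrix B) (i : B) :
    simpleReflection M i * simpleReflection M i = 1 :=
  mul_eq_one_iff_eq_inv.2 rfl

lemma simpleReflection_isLiftable (M : CoxeterMatrix B) : M.IsLiftable (simpleReflection M) := by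
  intro i j
  have hcoroot (i j : B) : ((2 : ℝ) • form M (simpleRoot i)) (simpleRoot j) =
      -2 * cos (π / M i j) := by
    simp [form_simpleRoot_simpleRoot]
  rcases eq_or_ne i j with rfl | hij
  · rw [simpleReflection_mul_self, one_pow]
  have h1 := M.off_diagonal i j hij
  obtain h0 | h2 | h3 : M i j = 0 ∨ M i j = 2 ∨ 2 < M i j := by lia
  · rw [h0, pow_zero]
  · rw [h2]
    have hcomm : Commute (simpleReflection M i) (simpleReflection M j) :=
      commute_reflection _ _ (by simp [hcoroot, h2]) (by simp [hcoroot, M.symmetric j i, h2])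
    rw [hcomm.mul_pow, sq, sq, simpleReflection_mul_self, simpleReflection_mul_self, one_mul]
  · exact reflection_mul_reflection_pow_eq_one _ _ h3
      (by rw [hcoroot, hcoroot, M.symmetric j i]; ring)

variable {M : CoxeterMatrix B} (cs : CoxeterSystem M W)

/-- The geometric representation of a Coxeter group. -/
noncomputable def geomRep : W →* ((B →₀ ℝ) ≃ₗ[ℝ] (B →₀ ℝ)) :=
  cs.lift ⟨simpleReflection M, simpleReflection_isLiftable M⟩

lemma geomRep_simple (i : B) : geomRep cs (cs.simple i) = simpleReflection M i :=
  cs.lift_apply_simple _ i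

lemma geomRep_mul_apply (v w : W) (x : B →₀ ℝ) :
    geomRep cs (v * w) x = geomRep cs v (geomRep cs w x) := by
  rw [map_mul, LinearEquiv.mul_apply]

lemma geomRep_inv_apply_self (w : W) (x : B →₀ ℝ) : geomRep cs w⁻¹ (geomRep cs w x) = x := by
  rw [← geomRep_mul_apply, inv_mul_cancel, map_one, LinearEquiv.coe_one, id]

lemma geomRep_apply_inv_self (w : W) (x : B →₀ ℝ) : geomRep cs w (geomRep cs w⁻¹ x) = x := by
  rw [← geomRep_mul_apply, mul_inv_cancel, map_one, LinearEquiv.coe_one, id]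

lemma geomRep_mul_simple_simpleRoot (w : W) (i : B) :
    geomRep cs (w * cs.simple i) (simpleRoot i) = -geomRep cs w (simpleRoot i) := by
  rw [geomRep_mul_apply, geomRep_simple, simpleReflection_simpleRoot_self, map_neg]

/-! ### Alternating words -/

/-- The number `sin (n π / m) / sin (π / m)`, or `n` if `m = 0` (which encodes `∞`).  As a value
of a Chebyshev polynomial it satisfies a linear recurrence without any case distinction. -/
noncomputable def dihedralCoeff (m n : ℕ) : ℝ :=
  (Polynomial.Chebyshev.S ℝ (n - 1)).eval (2 * cos (π / m))

lemma dihedralCoeff_zero_right (m : ℕ) : dihedralCoeff m 0 = 0 := by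
  simp [dihedralCoeff]

lemma dihedralCoeff_one_right (m : ℕ) : dihedralCoeff m 1 = 1 := by
  simp [dihedralCoeff]

lemma dihedralCoeff_add_two (m n : ℕ) :
    dihedralCoeff m (n + 2) = 2 * cos (π / m) * dihedralCoeff m (n + 1) - dihedralCoeff m n := by
  have h : ((n + 2 : ℕ) - 1 : ℤ) = n + 1 := by lia
  rw [dihedralCoeff, h, Polynomial.Chebyshev.S_add_one]
  simp [dihedralCoeff]

lemma dihedralCoeff_zero_left (n : ℕ) : dihedralCoeff 0 n = n := by
  simp [dihedralCoeff]

lemma dihedralCoeff_mul_sin (m n : ℕ) :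
    dihedralCoeff m n * sin (π / m) = sin (n * (π / m)) := by
  simp [dihedralCoeff, Polynomial.Chebyshev.S_two_mul_real_cos]

lemma sin_pi_div_pos {m : ℕ} (hm : 1 < m) : 0 < sin (π / m) := by
  have hm' : (1 : ℝ) < m := by exact_mod_cast hm
  exact sin_pos_of_pos_of_lt_pi (by positivity) (div_lt_self pi_pos hm')

lemma dihedralCoeff_nonneg {m n : ℕ} (h1 : m ≠ 1) (hn : m ≠ 0 → n ≤ m) :
    0 ≤ dihedralCoeff m n := by
  rcases eq_or_ne m 0 with rfl | h0
  · simp [dihedralCoeff_zero_left]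
  · have hnm : (n : ℝ) / m ≤ 1 := div_le_one_of_le₀ (by exact_mod_cast hn h0) m.cast_nonneg
    refine nonneg_of_mul_nonneg_left ?_ (sin_pi_div_pos (by lia : 1 < m))
    rw [dihedralCoeff_mul_sin, mul_div_left_comm]
    exact sin_nonneg_of_nonneg_of_le_pi (by positivity) (mul_le_of_le_one_right pi_pos.le hnm)

lemma dvd_of_dihedralCoeff_eq {m n : ℕ} (hm : m ≠ 1) (h0 : dihedralCoeff m (2 * n) = 0)
    (h1 : dihedralCoeff m (2 * n + 1) = 1) : m ∣ n := by
  rcases eq_or_ne m 0 with rfl | hm0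
  · simpa [dihedralCoeff_zero_left] using h0
  have hsin := sin_pi_div_pos (by lia : 1 < m)
  have hcos : cos (n * (2 * π) / m) = 1 := by
    have e0 := dihedralCoeff_mul_sin m (2 * n)
    have e1 := dihedralCoeff_mul_sin m (2 * n + 1)
    rw [h0, zero_mul] at e0
    rw [h1, one_mul, Nat.cast_succ, add_one_mul, sin_add, ← e0, zero_mul, zero_add,
      eq_comm, mul_eq_right₀ hsin.ne'] at e1
    rw [← e1]
    push_cast
    ring_nf
  obtain ⟨k, hk⟩ := (cos_eq_one_iff _).1 hcos
  have hmn : (n : ℝ) = m * k := by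
    field_simp at hk
    linarith
  exact Int.natCast_dvd_natCast.1 ⟨k, by exact_mod_cast hmn⟩

lemma simpleReflection_add_smul (M : CoxeterMatrix B) (i j : B) (a b : ℝ) :
    simpleReflection M j (a • simpleRoot i + b • simpleRoot j) =
      (2 * cos (π / M i j) * a - b) • simpleRoot j + a • simpleRoot i := by
  rw [simpleReflection_apply, map_add, map_smul, map_smul, form_simpleRoot_self,
    form_simpleRoot_simpleRoot, M.symmetric j i]
  module

lemma geomRep_alternatingWord (i j : B) (k : ℕ) :
    geomRep cs (cs.wordProd (CoxeterSystem.alternatingWord i j k)) (simpleRoot i) =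
      dihedralCoeff (M i j) (k + 1) • simpleRoot (if Even k then i else j) +
        dihedralCoeff (M i j) k • simpleRoot (if Even k then j else i) := by
  induction k with
  | zero => simp [dihedralCoeff_zero_right, dihedralCoeff_one_right,
      CoxeterSystem.alternatingWord]
  | succ k ih =>
    rw [CoxeterSystem.alternatingWord_succ', cs.wordProd_cons, geomRep_mul_apply, ih,
      geomRep_simple, dihedralCoeff_add_two]
    by_cases hk : Even k
    · simp only [hk, Nat.even_add_one, not_true, if_true, if_false, simpleReflection_add_smul]
    · simp only [hk, Nat.even_add_one, not_false_iff, if_true, if_false,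
        simpleReflection_add_smul, M.symmetric j i]

lemma orderOf_simple_mul_simple (i j : B) : orderOf (cs.simple i * cs.simple j) = M i j := by
  refine Nat.dvd_antisymm (orderOf_dvd_of_pow_eq_one (cs.simple_mul_simple_pow i j)) ?_
  rcases eq_or_ne i j with rfl | hij
  · simp
  set n := orderOf (cs.simple i * cs.simple j)
  have h := geomRep_alternatingWord cs i j (2 * n)
  rw [cs.prod_alternatingWord_eq_mul_pow, Nat.mul_div_cancel_left n two_pos, pow_orderOf_eq_one]
    at h
  refine dvd_of_dihedralCoeff_eq (M.off_diagonal i j hij) ?_ ?_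
  · simpa [hij, eq_comm] using DFunLike.congr_fun h j
  · simpa [hij.symm, eq_comm] using DFunLike.congr_fun h i

/-! ### Every root is positive or negative -/

lemma exists_alternatingWord_suffix {w : W} {i j : B} (hj : cs.IsRightDescent w j) :
    ∃ (v : W) (k : ℕ), 0 < k ∧ w = v * cs.wordProd (CoxeterSystem.alternatingWord i j k) ∧
      cs.length w = cs.length v + k ∧ ¬ cs.IsRightDescent v i ∧ ¬ cs.IsRightDescent v j := by
  let P (k : ℕ) : Prop := ∃ v : W, w = v * cs.wordProd (CoxeterSystem.alternatingWord i j k) ∧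
    cs.length w = cs.length v + k
  have hP_le (k : ℕ) : P k → k ≤ cs.length w := fun ⟨_, _, h⟩ ↦ by lia
  have hP_one : P 1 :=
    ⟨w * cs.simple j, by simp [CoxeterSystem.alternatingWord], (cs.isRightDescent_iff.1 hj).symm⟩
  obtain ⟨k, ⟨v, hw, hlen⟩, hmax⟩ : ∃ k, P k ∧ ∀ n, P n → n ≤ k := by
    classical
    exact ⟨_, Nat.findGreatest_spec (hP_le 1 hP_one) hP_one,
      fun n hn ↦ Nat.le_findGreatest (hP_le n hn) hn⟩
  have hk : 0 < k := hmax 1 hP_one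
  have hnext : ¬ cs.IsRightDescent v (if Even k then j else i) := by
    intro h
    refine absurd (hmax (k + 1) ⟨v * cs.simple (if Even k then j else i), ?_, ?_⟩) (by lia)
    · rw [CoxeterSystem.alternatingWord_succ', cs.wordProd_cons, mul_assoc,
        cs.simple_mul_simple_cancel_left, hw]
    · have := cs.isRightDescent_iff.1 h
      lia
  have hprev : ¬ cs.IsRightDescent v (if Even k then i else j) := by
    intro h
    obtain ⟨n, rfl⟩ : ∃ n, k = n + 1 := ⟨k - 1, by lia⟩
    rw [CoxeterSystem.alternatingWord_succ', cs.wordProd_cons, ← mul_assoc] at hw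
    have hletter : (if Even n then j else i) = if Even (n + 1) then i else j := by
      by_cases hn : Even n <;> simp [hn, Nat.even_add_one]
    have h1 := cs.length_mul_le (v * cs.simple (if Even n then j else i))
      (cs.wordProd (CoxeterSystem.alternatingWord i j n))
    have h2 := cs.length_wordProd_le (CoxeterSystem.alternatingWord i j n)
    rw [← hw, hletter] at h1
    rw [CoxeterSystem.length_alternatingWord] at h2
    have := cs.isRightDescent_iff.1 h
    lia
  refine ⟨v, k, hk, hw, hlen, ?_⟩
  by_cases hk : Even k <;> simp_all

lemma lt_of_alternatingWord_suffix {v : W} {i j : B} {k : ℕ} (hM : M i j ≠ 0)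
    (hlen : cs.length (v * cs.wordProd (CoxeterSystem.alternatingWord i j k)) = cs.length v + k)
    (hi : ¬ cs.IsRightDescent (v * cs.wordProd (CoxeterSystem.alternatingWord i j k)) i) :
    k < M i j := by
  by_contra! hk
  rw [M.symmetric] at hM hk
  apply cs.not_isReduced_alternatingWord j i hM (Nat.lt_succ_of_le hk)
  have hlen' := cs.not_isRightDescent_iff.1 hi
  rw [mul_assoc, ← cs.wordProd_concat, ← CoxeterSystem.alternatingWord_succ] at hlen'
  have h1 := cs.length_mul_le v (cs.wordProd (CoxeterSystem.alternatingWord j i (k + 1)))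
  have h2 := cs.length_wordProd_le (CoxeterSystem.alternatingWord j i (k + 1))
  rw [CoxeterSystem.length_alternatingWord] at h2
  rw [CoxeterSystem.IsReduced, CoxeterSystem.length_alternatingWord]
  lia

/-- The induction splits off a maximal suffix of `w` in the dihedral group of `i` and a right
descent `j`: this writes `w (eᵢ)` as a nonnegative combination of `v (eᵢ)` and `v (eⱼ)`, where
`i` and `j` are ascents of the shorter element `v`. -/
theorem geomRep_simpleRoot_nonneg {w : W} {i : B} (hi : ¬ cs.IsRightDescent w i) :
    0 ≤ geomRep cs w (simpleRoot i) := by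
  induction hn : cs.length w using Nat.strong_induction_on generalizing w i with
  | _ n ih =>
    subst hn
    rcases eq_or_ne w 1 with rfl | hw
    · simp
    obtain ⟨j, hj⟩ := cs.exists_rightDescent_of_ne_one hw
    have hij : i ≠ j := fun h ↦ hi (h ▸ hj)
    obtain ⟨v, k, hk, rfl, hlen, hvi, hvj⟩ := exists_alternatingWord_suffix cs (i := i) hj
    have hv (l : B) (hl : ¬ cs.IsRightDescent v l) : 0 ≤ geomRep cs v (simpleRoot l) :=
      ih _ (by lia) hl rfl
    have hkM (h0 : M i j ≠ 0) : k < M i j := lt_of_alternatingWord_suffix cs h0 hlen hi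
    have hM := M.off_diagonal i j hij
    rw [geomRep_mul_apply, geomRep_alternatingWord, map_add, map_smul, map_smul]
    refine add_nonneg (smul_nonneg (dihedralCoeff_nonneg hM hkM) (hv _ ?_))
      (smul_nonneg (dihedralCoeff_nonneg hM fun h ↦ (hkM h).le) (hv _ ?_)) <;>
    split_ifs <;> assumption

lemma geomRep_simpleRoot_nonpos {w : W} {i : B} (hi : cs.IsRightDescent w i) :
    geomRep cs w (simpleRoot i) ≤ 0 := by
  have h := geomRep_simpleRoot_nonneg cs (cs.isRightDescent_iff_not_isRightDescent_mul.1 hi)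
  rwa [geomRep_mul_simple_simpleRoot, neg_nonneg] at h

/-! ### Roots -/

/-- A root: a vector in the orbit of a simple root. -/
def IsRoot (β : B →₀ ℝ) : Prop := ∃ (w : W) (i : B), β = geomRep cs w (simpleRoot i)

lemma isRoot_simpleRoot (i : B) : IsRoot cs (simpleRoot i) := ⟨1, i, by simp⟩

lemma form_geomRep (w : W) (x y : B →₀ ℝ) :
    form M (geomRep cs w x) (geomRep cs w y) = form M x y := by
  induction w using cs.simple_induction_left generalizing x y with
  | one => simp
  | mul_simple_left w i ih =>
    rw [geomRep_mul_apply, geomRep_mul_apply, geomRep_simple, ← ih x y]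
    simp only [simpleReflection_apply, map_sub, map_smul, LinearMap.sub_apply,
      LinearMap.smul_apply, form_simpleRoot_self, form_symm M _ (simpleRoot i), smul_eq_mul]
    ring

lemma geomRep_conj_simple_apply (w : W) (i : B) (x : B →₀ ℝ) :
    geomRep cs (w * cs.simple i * w⁻¹) x =
      x - (2 * form M (geomRep cs w (simpleRoot i)) x) • geomRep cs w (simpleRoot i) := by
  rw [geomRep_mul_apply, geomRep_mul_apply, geomRep_simple, simpleReflection_apply, map_sub,
    map_smul, geomRep_apply_inv_self, ← form_geomRep cs w (simpleRoot i), geomRep_apply_inv_self]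

section

variable {cs} {β : B →₀ ℝ}

lemma IsRoot.geomRep (h : IsRoot cs β) (w : W) : IsRoot cs (geomRep cs w β) := by
  obtain ⟨v, i, rfl⟩ := h
  exact ⟨w * v, i, (geomRep_mul_apply cs w v _).symm⟩

lemma IsRoot.simpleReflection (h : IsRoot cs β) (i : B) : IsRoot cs (simpleReflection M i β) := by
  rw [← geomRep_simple cs]
  exact h.geomRep _

lemma IsRoot.neg (h : IsRoot cs β) : IsRoot cs (-β) := by
  obtain ⟨v, i, rfl⟩ := h
  exact ⟨v * cs.simple i, i, (geomRep_mul_simple_simpleRoot cs v i).symm⟩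

lemma IsRoot.nonneg_or_nonpos (h : IsRoot cs β) : 0 ≤ β ∨ β ≤ 0 := by
  obtain ⟨v, i, rfl⟩ := h
  by_cases hi : cs.IsRightDescent v i
  · exact Or.inr (geomRep_simpleRoot_nonpos cs hi)
  · exact Or.inl (geomRep_simpleRoot_nonneg cs hi)

lemma IsRoot.form_self (h : IsRoot cs β) : form M β β = 1 := by
  obtain ⟨v, i, rfl⟩ := h
  rw [form_geomRep, form_simpleRoot_self]

lemma IsRoot.ne_zero (h : IsRoot cs β) : β ≠ 0 := by
  rintro rfl
  simpa using h.form_self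

lemma IsRoot.eq_simpleRoot (h : IsRoot cs β) {i : B} (hβ : 0 ≤ β)
    (hsupp : ∀ j, j ≠ i → β j = 0) : β = simpleRoot i := by
  have hsmul : β = β i • simpleRoot i := by
    ext j
    rcases eq_or_ne j i with rfl | hji
    · simp
    · simp [hsupp j hji, hji.symm]
  have hone := h.form_self
  rw [hsmul, map_smul, map_smul, LinearMap.smul_apply, form_simpleRoot_self, smul_eq_mul,
    smul_eq_mul, mul_one, ← sq, pow_eq_one_iff_of_nonneg (hβ i) two_ne_zero] at hone
  rw [hsmul, hone, one_smul]

lemma IsRoot.simpleReflection_nonneg (h : IsRoot cs β) (hβ : 0 ≤ β) {i : B}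
    (hi : β ≠ simpleRoot i) : 0 ≤ Coxeter.simpleReflection M i β := by
  refine (h.simpleReflection i).nonneg_or_nonpos.resolve_right fun hneg ↦ hi ?_
  refine h.eq_simpleRoot hβ fun j hji ↦ le_antisymm ?_ (hβ j)
  simpa [simpleReflection_apply, hji.symm] using hneg j

end

/-! ### The closed chamber and its stabilizers -/

/-- The right action of the Coxeter group on the dual of the geometric representation. -/
noncomputable def pullback (f : Module.Dual ℝ (B →₀ ℝ)) (w : W) : Module.Dual ℝ (B →₀ ℝ) :=
  f ∘ₗ (geomRep cs w).toLinearMap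

lemma pullback_apply (f : Module.Dual ℝ (B →₀ ℝ)) (w : W) (x : B →₀ ℝ) :
    pullback cs f w x = f (geomRep cs w x) := rfl

lemma pullback_one (f : Module.Dual ℝ (B →₀ ℝ)) : pullback cs f 1 = f := by
  refine LinearMap.ext fun x ↦ ?_
  simp [pullback_apply]

lemma pullback_mul (f : Module.Dual ℝ (B →₀ ℝ)) (v w : W) :
    pullback cs f (v * w) = pullback cs (pullback cs f v) w := by
  refine LinearMap.ext fun x ↦ ?_
  simp only [pullback_apply, geomRep_mul_apply]

/-- The closed fundamental chamber in the dual of the geometric representation. -/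
def chamber (B : Type*) : Set (Module.Dual ℝ (B →₀ ℝ)) := {f | ∀ i, 0 ≤ f (simpleRoot i)}

lemma apply_nonneg_of_mem_chamber {f : Module.Dual ℝ (B →₀ ℝ)} (hf : f ∈ chamber B)
    {x : B →₀ ℝ} (hx : 0 ≤ x) : 0 ≤ f x := by
  have hsum : f x = ∑ i ∈ x.support, x i * f (simpleRoot i) := by
    conv_lhs => rw [← x.sum_single, Finsupp.sum, map_sum]
    refine Finset.sum_congr rfl fun i _ ↦ ?_
    rw [← smul_eq_mul, ← map_smul, Finsupp.smul_single_one]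
  exact hsum ▸ Finset.sum_nonneg fun i _ ↦ mul_nonneg (hx i) (hf i)

lemma apply_nonpos_of_mem_chamber {f : Module.Dual ℝ (B →₀ ℝ)} (hf : f ∈ chamber B)
    {x : B →₀ ℝ} (hx : x ≤ 0) : f x ≤ 0 := by
  simpa using apply_nonneg_of_mem_chamber hf (neg_nonneg.2 hx)

/-- The generators whose simple roots are annihilated by `f`, that is, the walls through `f`. -/
def zeroSet (f : Module.Dual ℝ (B →₀ ℝ)) : Set B := {i | f (simpleRoot i) = 0}

lemma pullback_simple {f : Module.Dual ℝ (B →₀ ℝ)} {i : B} (hi : i ∈ zeroSet f) :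
    pullback cs f (cs.simple i) = f := by
  refine LinearMap.ext fun x ↦ ?_
  rw [pullback_apply, geomRep_simple, simpleReflection_apply, map_sub, map_smul, hi, smul_zero,
    sub_zero]

lemma pullback_eq_of_mem_parabolic {f : Module.Dual ℝ (B →₀ ℝ)} {w : W}
    (hw : w ∈ cs.parabolic (zeroSet f)) : pullback cs f w = f := by
  induction hw using Subgroup.closure_induction with
  | mem x hx =>
    obtain ⟨i, hi, rfl⟩ := hx
    exact pullback_simple cs hi
  | one => exact pullback_one cs f
  | mul x y _ _ hx hy => rw [pullback_mul, hx, hy]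
  | inv x _ hx => rw [← hx, ← pullback_mul, mul_inv_cancel, pullback_one, hx]

theorem eq_and_mem_parabolic_of_mem_chamber {f : Module.Dual ℝ (B →₀ ℝ)} {w : W}
    (hf : f ∈ chamber B) (hw : pullback cs f w ∈ chamber B) :
    pullback cs f w = f ∧ w ∈ cs.parabolic (zeroSet f) := by
  induction hn : cs.length w using Nat.strong_induction_on generalizing w with
  | _ n ih =>
    subst hn
    rcases eq_or_ne w 1 with rfl | hw1
    · exact ⟨pullback_one cs f, one_mem _⟩
    obtain ⟨i, hi⟩ := cs.exists_rightDescent_of_ne_one hw1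
    have hwall : i ∈ zeroSet (pullback cs f w) :=
      le_antisymm (apply_nonpos_of_mem_chamber hf (geomRep_simpleRoot_nonpos cs hi)) (hw i)
    have heq : pullback cs f (w * cs.simple i) = pullback cs f w := by
      rw [pullback_mul, pullback_simple cs hwall]
    obtain ⟨hfix, hmem⟩ := ih _ hi (by rwa [heq]) rfl
    rw [heq] at hfix
    have hsimple : cs.simple i ∈ cs.parabolic (zeroSet f) :=
      Subgroup.subset_closure ⟨i, hfix ▸ hwall, rfl⟩
    exact ⟨hfix, by simpa using mul_mem hmem hsimple⟩

lemma mem_parabolic_of_pullback_eq {f : Module.Dual ℝ (B →₀ ℝ)} {w : W} (hf : f ∈ chamber B)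
    (hw : pullback cs f w = f) : w ∈ cs.parabolic (zeroSet f) :=
  (eq_and_mem_parabolic_of_mem_chamber cs hf (by rwa [hw])).2

/-! ### The interior of the Tits cone -/

/-- The positive roots at which `f` is not positive.  This set is finite exactly when `f` lies in
the interior of the Tits cone. -/
def invertedRoots (f : Module.Dual ℝ (B →₀ ℝ)) : Set (B →₀ ℝ) :=
  {β | IsRoot cs β ∧ 0 ≤ β ∧ f β ≤ 0}

lemma simpleReflection_simpleReflection (i : B) (x : B →₀ ℝ) :
    simpleReflection M i (simpleReflection M i x) = x :=
  Module.involutive_reflection _ x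

lemma invertedRoots_pullback_simple_subset (f : Module.Dual ℝ (B →₀ ℝ)) (i : B) :
    invertedRoots cs (pullback cs f (cs.simple i)) ⊆
      insert (simpleRoot i) (simpleReflection M i '' (invertedRoots cs f \ {simpleRoot i})) := by
  rintro β ⟨hroot, hpos, hf⟩
  rcases eq_or_ne β (simpleRoot i) with rfl | hne
  · exact Set.mem_insert _ _
  rw [pullback_apply, geomRep_simple] at hf
  refine Set.mem_insert_of_mem _ ⟨simpleReflection M i β,
    ⟨⟨hroot.simpleReflection i, hroot.simpleReflection_nonneg hpos hne, hf⟩, ?_⟩,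
    simpleReflection_simpleReflection i β⟩
  intro h
  have hneg : β = -simpleRoot i := by
    rw [← simpleReflection_simpleReflection (M := M) i β, h, simpleReflection_simpleRoot_self]
  exact absurd (hpos i) (by simp [hneg])

lemma invertedRoots_pullback_finite {f : Module.Dual ℝ (B →₀ ℝ)}
    (hf : (invertedRoots cs f).Finite) (w : W) : (invertedRoots cs (pullback cs f w)).Finite := by
  induction w using cs.simple_induction_right with
  | one => rwa [pullback_one]
  | mul_simple_right w i ih =>
    rw [pullback_mul]
    exact ((ih.sdiff.image _).insert _).subset (invertedRoots_pullback_simple_subset cs _ i)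

/-- Reflecting in a wall that separates `f` from the chamber removes an inverted root. -/
theorem exists_pullback_mem_chamber {f : Module.Dual ℝ (B →₀ ℝ)}
    (hf : (invertedRoots cs f).Finite) : ∃ w, pullback cs f w ∈ chamber B := by
  induction hn : (invertedRoots cs f).ncard using Nat.strong_induction_on generalizing f with
  | _ n ih =>
    subst hn
    by_cases hc : f ∈ chamber B
    · exact ⟨1, by rwa [pullback_one]⟩
    obtain ⟨i, hi⟩ : ∃ i, f (simpleRoot i) < 0 := by simpa [chamber] using hc
    have hmem : simpleRoot i ∈ invertedRoots cs f :=
      ⟨isRoot_simpleRoot cs i, Finsupp.single_nonneg.2 zero_le_one, hi.le⟩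
    have hnot : simpleRoot i ∉ invertedRoots cs (pullback cs f (cs.simple i)) := by
      rintro ⟨-, -, h⟩
      rw [pullback_apply, geomRep_simple, simpleReflection_simpleRoot_self, map_neg] at h
      linarith
    have hsub : invertedRoots cs (pullback cs f (cs.simple i)) ⊆
        simpleReflection M i '' (invertedRoots cs f \ {simpleRoot i}) := fun β hβ ↦
      (invertedRoots_pullback_simple_subset cs f i hβ).resolve_left fun h ↦ hnot (h ▸ hβ)
    have hlt : (invertedRoots cs (pullback cs f (cs.simple i))).ncard <
        (invertedRoots cs f).ncard :=
      calc _ ≤ (simpleReflection M i '' (invertedRoots cs f \ {simpleRoot i})).ncard :=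
            Set.ncard_le_ncard hsub (hf.sdiff.image _)
        _ ≤ (invertedRoots cs f \ {simpleRoot i}).ncard := Set.ncard_image_le hf.sdiff
        _ < _ := Set.ncard_sdiff_singleton_lt_of_mem hmem hf
    obtain ⟨w, hw⟩ := ih _ hlt (invertedRoots_pullback_finite cs hf _) rfl
    exact ⟨cs.simple i * w, by rwa [pullback_mul]⟩

lemma geomRep_apply_of_notMem {T : Set B} {w : W} (hw : w ∈ cs.parabolic T) {j : B} (hj : j ∉ T)
    (x : B →₀ ℝ) : geomRep cs w x j = x j := by
  induction hw using Subgroup.closure_induction generalizing x with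
  | mem v hv =>
    obtain ⟨i, hi, rfl⟩ := hv
    have hij : i ≠ j := fun h ↦ hj (h ▸ hi)
    simp [geomRep_simple, simpleReflection_apply, hij]
  | one => simp
  | mul u v _ _ hu hv => rw [geomRep_mul_apply, hu, hv]
  | inv v _ hv => rw [← hv, geomRep_apply_inv_self]

lemma eq_one_of_fixes_simpleRoots {T : Set B} {w : W} (hw : w ∈ cs.parabolic T)
    (hfix : ∀ i ∈ T, geomRep cs w (simpleRoot i) = simpleRoot i) : w = 1 := by
  by_contra hw1
  obtain ⟨i, hi⟩ := cs.exists_rightDescent_of_ne_one hw1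
  have hcoord : geomRep cs w (simpleRoot i) i = 1 := by
    by_cases hiT : i ∈ T
    · simp [hfix i hiT]
    · simp [geomRep_apply_of_notMem cs hw hiT]
  have hneg := geomRep_simpleRoot_nonpos cs hi i
  rw [hcoord] at hneg
  exact absurd hneg (by simp)

/-- The parabolic subgroup of the zero set of `f` acts faithfully on the roots that vanish
at `f`, and these are inverted roots of `f` up to sign. -/
theorem isSpherical_zeroSet {f : Module.Dual ℝ (B →₀ ℝ)} (hf : (invertedRoots cs f).Finite) :
    cs.IsSpherical (zeroSet f) := by
  let Z : Set (B →₀ ℝ) := {β | IsRoot cs β ∧ f β = 0}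
  have hZ : Z.Finite := by
    refine (hf.union hf.neg).subset ?_
    rintro β ⟨hβ, h0⟩
    rcases hβ.nonneg_or_nonpos with h | h
    · exact Or.inl ⟨hβ, h, h0.le⟩
    · exact Or.inr ⟨hβ.neg, neg_nonneg.2 h, by simp [h0]⟩
  have hmem (w : cs.parabolic (zeroSet f)) (i : zeroSet f) :
      geomRep cs (w : W) (simpleRoot (i : B)) ∈ Z :=
    ⟨⟨w, i, rfl⟩, (DFunLike.congr_fun (pullback_eq_of_mem_parabolic cs w.2) _).trans i.2⟩
  have : Finite Z := hZ
  have : Finite (zeroSet f) := by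
    refine Finite.of_injective (fun i ↦ (⟨_, hmem 1 i⟩ : Z)) fun i j hij ↦ Subtype.ext ?_
    exact Finsupp.single_left_injective one_ne_zero (by simpa using congrArg Subtype.val hij)
  refine Finite.of_injective (fun w i ↦ (⟨_, hmem w i⟩ : Z)) fun v w hvw ↦ Subtype.ext ?_
  rw [← inv_mul_eq_one]
  refine eq_one_of_fixes_simpleRoots cs (mul_mem (inv_mem v.2) w.2) fun i hi ↦ ?_
  have hvwi : geomRep cs (v : W) (simpleRoot i) = geomRep cs (w : W) (simpleRoot i) :=
    congrArg Subtype.val (congrFun hvw ⟨i, hi⟩)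
  rw [geomRep_mul_apply, ← hvwi, geomRep_inv_apply_self]

open Classical in
/-- A point of the closed chamber with zero set `T`. -/
noncomputable def facePoint (T : Set B) : Module.Dual ℝ (B →₀ ℝ) :=
  Finsupp.linearCombination ℝ fun i ↦ if i ∈ T then 0 else 1

lemma facePoint_of_mem {T : Set B} {i : B} (hi : i ∈ T) : facePoint T (simpleRoot i) = 0 := by
  simp [facePoint, hi]

lemma facePoint_of_notMem {T : Set B} {i : B} (hi : i ∉ T) : facePoint T (simpleRoot i) = 1 := by
  simp [facePoint, hi]

lemma facePoint_mem_chamber (T : Set B) : facePoint T ∈ chamber B := by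
  intro i
  by_cases hi : i ∈ T
  · exact (facePoint_of_mem hi).ge
  · exact (facePoint_of_notMem hi).symm ▸ zero_le_one

lemma zeroSet_facePoint (T : Set B) : zeroSet (facePoint T) = T := by
  ext i
  by_cases hi : i ∈ T
  · simp [zeroSet, facePoint_of_mem hi, hi]
  · simp [zeroSet, facePoint_of_notMem hi, hi]

variable {cs} in
lemma IsRoot.eq_of_reflection_eq {β γ : B →₀ ℝ} (hβ : IsRoot cs β) (hγ : IsRoot cs γ)
    (hβ0 : 0 ≤ β) (hγ0 : 0 ≤ γ) (h : ∀ x, (2 * form M β x) • β = (2 * form M γ x) • γ) :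
    β = γ := by
  have hβγ : β = form M γ β • γ := by
    have h2 := h β
    rw [hβ.form_self, mul_smul, one_smul, mul_smul] at h2
    exact smul_right_injective _ (two_ne_zero' ℝ) h2
  have hsq : form M γ β * form M γ β = 1 := by
    have h1 := hβ.form_self
    rw [hβγ] at h1
    simpa [hγ.form_self] using h1
  rcases mul_self_eq_one_iff.1 hsq with h1 | h1
  · rw [hβγ, h1, one_smul]
  · rw [h1, neg_one_smul] at hβγ
    exact absurd (le_antisymm (neg_nonneg.1 (hβγ ▸ hβ0)) hγ0) hγ.ne_zero

lemma exists_reflection_mem_parabolic {T : Set B} {β : B →₀ ℝ}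
    (hβ : β ∈ invertedRoots cs (facePoint T)) :
    ∃ r ∈ cs.parabolic T, ∀ x, geomRep cs r x = x - (2 * form M β x) • β := by
  obtain ⟨⟨w, i, rfl⟩, hpos, hle⟩ := hβ
  have h0 := le_antisymm hle (apply_nonneg_of_mem_chamber (facePoint_mem_chamber T) hpos)
  refine ⟨w * cs.simple i * w⁻¹, ?_, geomRep_conj_simple_apply cs w i⟩
  rw [← zeroSet_facePoint T]
  refine mem_parabolic_of_pullback_eq cs (facePoint_mem_chamber T) ?_
  refine LinearMap.ext fun x ↦ ?_
  rw [pullback_apply, geomRep_conj_simple_apply, map_sub, map_smul, h0, smul_zero, sub_zero]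

theorem invertedRoots_facePoint_finite {T : Set B} (hT : cs.IsSpherical T) :
    (invertedRoots cs (facePoint T)).Finite := by
  have : Finite (cs.parabolic T) := hT
  choose! r hr hrefl using fun β (hβ : β ∈ invertedRoots cs (facePoint T)) ↦
    exists_reflection_mem_parabolic cs hβ
  refine Set.Finite.of_injOn hr (fun β hβ γ hγ h ↦ ?_) (Set.toFinite (cs.parabolic T : Set W))
  refine hβ.1.eq_of_reflection_eq hγ.1 hβ.2.1 hγ.2.1 fun x ↦ ?_
  exact sub_right_injective ((hrefl β hβ x).symm.trans (h ▸ hrefl γ hγ x))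

/-! ### Finite subgroups -/

lemma isSpherical_empty : cs.IsSpherical ∅ := by
  rw [CoxeterSystem.IsSpherical, CoxeterSystem.parabolic, Set.image_empty, Subgroup.closure_empty]
  infer_instance

lemma exists_fixed_of_finite (H : Subgroup W) [Finite H] :
    ∃ f : Module.Dual ℝ (B →₀ ℝ), (invertedRoots cs f).Finite ∧ ∀ h ∈ H, pullback cs f h = f := by
  have := Fintype.ofFinite H
  let p : Module.Dual ℝ (B →₀ ℝ) := facePoint ∅
  have hp : (invertedRoots cs p).Finite :=
    invertedRoots_facePoint_finite cs (isSpherical_empty cs)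
  have hsum (x : B →₀ ℝ) :
      (∑ h : H, pullback cs p h) x = ∑ h : H, p (geomRep cs (h : W) x) :=
    LinearMap.sum_apply _ _ _
  refine ⟨∑ h : H, pullback cs p h, ?_, fun h hh ↦ LinearMap.ext fun x ↦ ?_⟩
  · refine (Set.finite_iUnion fun h : H ↦ invertedRoots_pullback_finite cs hp h).subset ?_
    rintro β ⟨hroot, hpos, hβ⟩
    obtain ⟨h, -, hle⟩ := Finset.exists_le_of_sum_le (s := Finset.univ)
      (f := fun h : H ↦ p (geomRep cs (h : W) β)) (g := 0) ⟨1, Finset.mem_univ _⟩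
      (by simpa only [Pi.zero_apply, Finset.sum_const_zero, ← hsum])
    exact Set.mem_iUnion.2 ⟨h, hroot, hpos, hle⟩
  · rw [pullback_apply, hsum, hsum]
    refine Fintype.sum_equiv (Equiv.mulRight (⟨h, hh⟩ : H)) _ _ fun k ↦ ?_
    simp only [Equiv.coe_mulRight, Subgroup.coe_mul, geomRep_mul_apply]

/-- A theorem of Tits. -/
theorem exists_isSpherical_of_finite (H : Subgroup W) [Finite H] :
    ∃ (g : W) (T : Set B), cs.IsSpherical T ∧ ∀ h ∈ H, g⁻¹ * h * g ∈ cs.parabolic T := by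
  obtain ⟨f, hf, hfix⟩ := exists_fixed_of_finite cs H
  obtain ⟨g, hg⟩ := exists_pullback_mem_chamber cs hf
  refine ⟨g, _, isSpherical_zeroSet cs (invertedRoots_pullback_finite cs hf g), fun h hh ↦
    mem_parabolic_of_pullback_eq cs hg ?_⟩
  rw [← pullback_mul, mul_assoc, mul_inv_cancel_left, pullback_mul, hfix h hh]

/-- Otherwise `p` is not positive on some `eᵢ`, `i ∉ U`.  The segment from the face point of `U`
to `p` then contains a point where `eᵢ` vanishes, and `insert i U` would be spherical. -/
lemma pos_of_isMaxSpherical {U : Set B} (hU : cs.IsMaxSpherical U)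
    {p : Module.Dual ℝ (B →₀ ℝ)} (hp : (invertedRoots cs p).Finite) (hpU : U ⊆ zeroSet p)
    {i : B} (hi : i ∉ U) : 0 < p (simpleRoot i) := by
  by_contra! hle
  set q : Module.Dual ℝ (B →₀ ℝ) := (-p (simpleRoot i)) • facePoint U + p
  have hq_apply (x : B →₀ ℝ) : q x = -p (simpleRoot i) * facePoint U x + p x := rfl
  have hqU : U ⊆ zeroSet q := fun b hb ↦ by
    have hpb : p (simpleRoot b) = 0 := hpU hb
    simp [zeroSet, hq_apply, hpb, facePoint_of_mem hb]
  have hqi : i ∈ zeroSet q := by simp [zeroSet, hq_apply, facePoint_of_notMem hi]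
  have hqfin : (invertedRoots cs q).Finite := by
    refine hp.subset fun β ⟨hroot, hpos, hqβ⟩ ↦ ⟨hroot, hpos, ?_⟩
    have := mul_nonneg (neg_nonneg.2 hle)
      (apply_nonneg_of_mem_chamber (facePoint_mem_chamber U) hpos)
    rw [hq_apply] at hqβ
    linarith
  exact hi (hU.2 _ (isSpherical_zeroSet cs hqfin) hqU ▸ hqi)

lemma mem_zeroSet_of_pullback_simple {f : Module.Dual ℝ (B →₀ ℝ)} {i : B}
    (h : pullback cs f (cs.simple i) = f) : i ∈ zeroSet f := by
  have hi := DFunLike.congr_fun h (simpleRoot i)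
  rwa [pullback_apply, geomRep_simple, simpleReflection_simpleRoot_self, map_neg,
    neg_eq_self] at hi

/-- A translate `p` of the face point of `T` is fixed by `W_U`, hence lies in the closed chamber,
with zero set `U`; so `p` is the face point of `T` itself. -/
theorem eq_of_conj_mem_parabolic {U T : Set B} (hU : cs.IsMaxSpherical U) (hT : cs.IsSpherical T)
    (g : W) (hg : ∀ u ∈ cs.parabolic U, g⁻¹ * u * g ∈ cs.parabolic T) : T = U := by
  set p := pullback cs (facePoint T) g⁻¹
  have hp : (invertedRoots cs p).Finite :=
    invertedRoots_pullback_finite cs (invertedRoots_facePoint_finite cs hT) _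
  have hpU : U ⊆ zeroSet p := fun b hb ↦ by
    have hfix := hg _ (Subgroup.subset_closure ⟨b, hb, rfl⟩)
    rw [← zeroSet_facePoint T] at hfix
    apply mem_zeroSet_of_pullback_simple cs
    calc pullback cs p (cs.simple b) = pullback cs (facePoint T) (g⁻¹ * cs.simple b) :=
          (pullback_mul cs _ _ _).symm
      _ = pullback cs (facePoint T) (g⁻¹ * cs.simple b * g * g⁻¹) := by
          rw [mul_inv_cancel_right]
      _ = p := by rw [pullback_mul, pullback_eq_of_mem_parabolic cs hfix]
  have hpos (i : B) (hi : i ∉ U) : 0 < p (simpleRoot i) := pos_of_isMaxSpherical cs hU hp hpU hi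
  have hzero : zeroSet p = U :=
    hpU.antisymm' fun i hi ↦ by_contra fun hiU ↦ (hpos i hiU).ne' hi
  have hchamber : p ∈ chamber B := fun i ↦ by
    by_cases hi : i ∈ U
    · exact (hpU hi).ge
    · exact (hpos i hi).le
  have heq := (eq_and_mem_parabolic_of_mem_chamber cs (facePoint_mem_chamber T) hchamber).1
  rw [← zeroSet_facePoint T, ← heq, hzero]
/-! ### Commuting generators -/

lemma eq_two_of_commute {i j : B} (hij : i ≠ j) (h : Commute (cs.simple i) (cs.simple j)) :
    M i j = 2 := by
  have hdvd : M i j ∣ 2 := by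
    rw [← orderOf_simple_mul_simple cs]
    refine orderOf_dvd_of_pow_eq_one ?_
    rw [h.mul_pow, cs.simple_sq, cs.simple_sq, one_mul]
  exact ((Nat.dvd_prime Nat.prime_two).1 hdvd).resolve_left (M.off_diagonal i j hij)

lemma commute_of_eq_two {i j : B} (h : M i j = 2) : Commute (cs.simple i) (cs.simple j) := by
  have hsq := cs.simple_mul_simple_pow i j
  rw [h, pow_two] at hsq
  rw [Commute, SemiconjBy, eq_inv_of_mul_eq_one_left hsq, mul_inv_rev, cs.inv_simple,
    cs.inv_simple]

lemma simple_mem_parabolic {T : Set B} {i : B} (hi : i ∈ T) : cs.simple i ∈ cs.parabolic T :=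
  Subgroup.subset_closure (Set.mem_image_of_mem _ hi)

lemma pairwise_eq_two_of_mulEquiv {T : Set B} {A : Type*} [CommGroup A]
    (e : cs.parabolic T ≃* A) : T.Pairwise fun i j ↦ M i j = 2 := by
  intro i hi j hj hij
  refine eq_two_of_commute cs hij (congrArg Subtype.val (?_ :
    (⟨_, simple_mem_parabolic cs hi⟩ * ⟨_, simple_mem_parabolic cs hj⟩ : cs.parabolic T) =
      ⟨_, simple_mem_parabolic cs hj⟩ * ⟨_, simple_mem_parabolic cs hi⟩))
  exact e.injective (by rw [map_mul, map_mul, mul_comm])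

lemma simpleReflection_simpleRoot_of_eq_two {i j : B} (h : M i j = 2) :
    simpleReflection M i (simpleRoot j) = simpleRoot j := by
  simp [simpleReflection_apply, form_simpleRoot_simpleRoot, h]

lemma exists_geomRep_simpleRoot_eq_neg {T A : Set B} (hT : T.Pairwise fun i j ↦ M i j = 2)
    (hA : A.Finite) (hAT : A ⊆ T) :
    ∃ w ∈ cs.parabolic T, (∀ i ∈ A, geomRep cs w (simpleRoot i) = -simpleRoot i) ∧
      ∀ i ∈ T \ A, geomRep cs w (simpleRoot i) = simpleRoot i := by
  induction A, hA using Set.Finite.induction_on with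
  | empty => exact ⟨1, one_mem _, by simp, by simp⟩
  | @insert a A ha _ ih =>
    rw [Set.insert_subset_iff] at hAT
    obtain ⟨haT, hAT⟩ := hAT
    obtain ⟨w, hw, hneg, hfix⟩ := ih hAT
    have hafix {i : B} (hi : i ∈ T) (hia : i ≠ a) :
        simpleReflection M a (simpleRoot i) = simpleRoot i :=
      simpleReflection_simpleRoot_of_eq_two (hT haT hi hia.symm)
    refine ⟨cs.simple a * w, mul_mem (simple_mem_parabolic cs haT) hw, ?_, ?_⟩
    · rintro i (rfl | hi)
      · rw [geomRep_mul_apply, hfix i ⟨haT, ha⟩, geomRep_simple, simpleReflection_simpleRoot_self]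
      · rw [geomRep_mul_apply, hneg i hi, map_neg, geomRep_simple,
          hafix (hAT hi) (ne_of_mem_of_not_mem hi ha)]
    · rintro i ⟨hi, hiA⟩
      rw [Set.mem_insert_iff, not_or] at hiA
      rw [geomRep_mul_apply, hfix i ⟨hi, hiA.2⟩, geomRep_simple, hafix hi hiA.1]

lemma two_pow_ncard_le_card_parabolic {T : Set B} (hT : cs.IsSpherical T)
    (hT2 : T.Pairwise fun i j ↦ M i j = 2) : 2 ^ T.ncard ≤ Nat.card (cs.parabolic T) := by
  have : Finite (cs.parabolic T) := hT
  rcases T.finite_or_infinite with hfin | hinf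
  swap
  · rw [hinf.ncard, pow_zero]
    exact Nat.card_pos
  choose w hw hneg hfix using fun A : 𝒫 T ↦
    exists_geomRep_simpleRoot_eq_neg cs hT2 (hfin.subset A.2) A.2
  have hne (i : B) : (simpleRoot i : B →₀ ℝ) ≠ -simpleRoot i := fun h ↦
    Finsupp.single_ne_zero.2 one_ne_zero (self_eq_neg.1 h)
  have hsub {A A' : 𝒫 T} (h : w A = w A') : A.1 ⊆ A'.1 := fun i hi ↦ by
    by_contra hi'
    exact hne i ((hfix A' i ⟨A.2 hi, hi'⟩).symm.trans (h ▸ hneg A i hi))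
  have hinj : Function.Injective fun A ↦ (⟨w A, hw A⟩ : cs.parabolic T) := fun A A' h ↦
    Subtype.ext ((hsub (congrArg Subtype.val h)).antisymm (hsub (congrArg Subtype.val h.symm)))
  simpa only [Nat.card_coe_set_eq, Set.ncard_powerset T hfin] using
    Nat.card_le_card_of_injective _ hinj

/-! ### The abelianization -/

/-- The class of the generator `i` in the abelianization of `W`. -/
def simpleClass (i : B) : Abelianization W := Abelianization.of (cs.simple i)

lemma simpleClass_mul_self (i : B) : simpleClass cs i * simpleClass cs i = 1 := by
  rw [simpleClass, ← map_mul, cs.simple_mul_simple_self, map_one]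

lemma simpleClass_eq_of_odd {i j : B} (h : Odd (M i j)) : simpleClass cs i = simpleClass cs j := by
  have hpow : (simpleClass cs i * simpleClass cs j) ^ M i j = 1 := by
    rw [simpleClass, simpleClass, ← map_mul, ← map_pow, cs.simple_mul_simple_pow, map_one]
  have hsq : (simpleClass cs i * simpleClass cs j) ^ 2 = 1 := by
    rw [mul_pow, pow_two, pow_two, simpleClass_mul_self, simpleClass_mul_self, one_mul]
  obtain ⟨k, hk⟩ := h
  rw [hk, pow_succ, pow_mul, hsq, one_pow, one_mul] at hpow
  rw [← mul_left_inj (simpleClass cs j), hpow, simpleClass_mul_self]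

open Classical in
lemma isLiftable_indicator {A : Set B} (hA : ∀ i j, Odd (M i j) → i ∈ A → j ∈ A) :
    M.IsLiftable fun i ↦ if i ∈ A then Multiplicative.ofAdd (1 : ZMod 2) else 1 := by
  have hsq : ∀ x : Multiplicative (ZMod 2), x * x = 1 := by decide
  intro i j
  rcases Nat.even_or_odd (M i j) with heven | hodd
  · obtain ⟨k, hk⟩ := heven
    rw [hk, ← two_mul, pow_mul, pow_two, hsq, one_pow]
  · have hiff : i ∈ A ↔ j ∈ A := ⟨hA i j hodd, hA j i (M.symmetric i j ▸ hodd)⟩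
    simp only [hiff, hsq, one_pow]

open Classical in
/-- The character of the abelianization which is nontrivial precisely at the generators in `A`,
for a set `A` closed under odd edges. -/
noncomputable def character (A : Set B) (hA : ∀ i j, Odd (M i j) → i ∈ A → j ∈ A) :
    Abelianization W →* Multiplicative (ZMod 2) :=
  Abelianization.lift (cs.lift ⟨_, isLiftable_indicator hA⟩)

lemma character_simpleClass {A : Set B} (hA : ∀ i j, Odd (M i j) → i ∈ A → j ∈ A) (i : B) :
    character cs A hA (simpleClass cs i) ≠ 1 ↔ i ∈ A := by
  rw [character, simpleClass, Abelianization.lift_apply_of, cs.lift_apply_simple]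
  by_cases hi : i ∈ A <;> simp [hi]

lemma simpleClass_eq_iff {i j : B} :
    simpleClass cs i = simpleClass cs j ↔ Relation.ReflTransGen (Odd <| M · ·) i j := by
  constructor <;> intro h
  · have hclosed : ∀ a b, Odd (M a b) → a ∈ {k | Relation.ReflTransGen (Odd <| M · ·) i k} →
        b ∈ {k | Relation.ReflTransGen (Odd <| M · ·) i k} := fun _ _ hab hia ↦ hia.tail hab
    exact (character_simpleClass cs hclosed j).1 (h ▸ (character_simpleClass cs hclosed i).2 .refl)
  · induction h with
    | refl => rfl
    | tail _ hodd ih => exact ih.trans (simpleClass_eq_of_odd cs hodd)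

lemma exists_odd_of_simpleClass_eq {i j : B} (hij : i ≠ j)
    (h : simpleClass cs i = simpleClass cs j) :
    ∃ l, i ≠ l ∧ Odd (M i l) := by
  by_contra! hno
  refine hij ?_
  clear hij
  rw [simpleClass_eq_iff] at h
  induction h with
  | refl => rfl
  | tail _ hodd ih =>
    by_contra hne
    exact hno _ hne (ih ▸ hodd)

/-- The coordinate at `c` with respect to the distinct classes of generators, which form a basis of
the abelianization over `ℤ/2`. -/
noncomputable def coord (c : Abelianization W) : Abelianization W →* Multiplicative (ZMod 2) :=
  character cs {i | simpleClass cs i = c} fun _ _ hodd hi ↦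
    (simpleClass_eq_of_odd cs hodd).symm.trans hi

lemma coord_simpleClass (c : Abelianization W) (i : B) :
    coord cs c (simpleClass cs i) ≠ 1 ↔ simpleClass cs i = c :=
  character_simpleClass cs _ i

/-- The set of classes of generators occurring in an element of the abelianization. -/
def supp (v : Abelianization W) : Set (Abelianization W) := {c | coord cs c v ≠ 1}

lemma mem_supp {c v : Abelianization W} : c ∈ supp cs v ↔ coord cs c v ≠ 1 := Iff.rfl

lemma supp_one : supp cs 1 = ∅ :=
  Set.eq_empty_of_forall_notMem fun _ hc ↦ (mem_supp cs).1 hc (map_one _)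

lemma supp_simpleClass (i : B) : supp cs (simpleClass cs i) = {simpleClass cs i} := by
  ext c
  rw [mem_supp, coord_simpleClass, Set.mem_singleton_iff, eq_comm]

lemma simpleClass_ne_one (i : B) : simpleClass cs i ≠ 1 := fun h ↦
  (coord_simpleClass cs (simpleClass cs i) i).2 rfl (by rw [h, map_one])

lemma supp_prod {A : Finset (Abelianization W)} (hA : ↑A ⊆ Set.range (simpleClass cs)) :
    supp cs (∏ c ∈ A, c) = A := by
  classical
  have hcoord (c : Abelianization W) {a : Abelianization W} (ha : a ∈ A) (hac : a ≠ c) :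
      coord cs c a = 1 := by
    obtain ⟨i, rfl⟩ := hA ha
    exact not_not.1 (mt (coord_simpleClass cs c i).1 hac)
  ext c
  rw [mem_supp, map_prod, Finset.mem_coe]
  constructor
  · refine not_imp_comm.1 fun hc ↦ Finset.prod_eq_one fun a ha ↦ hcoord c ha ?_
    exact ne_of_mem_of_not_mem ha hc
  · intro hc
    rw [Finset.prod_eq_single_of_mem c hc fun a ha hac ↦ hcoord c ha hac]
    obtain ⟨i, rfl⟩ := hA hc
    exact (coord_simpleClass cs _ i).2 rfl

lemma exists_finset_prod (v : Abelianization W) :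
    ∃ A : Finset (Abelianization W), ↑A ⊆ Set.range (simpleClass cs) ∧ v = ∏ c ∈ A, c := by
  classical
  obtain ⟨w, rfl⟩ : ∃ w, Abelianization.of w = v := QuotientGroup.mk_surjective v
  induction w using cs.simple_induction_left with
  | one => exact ⟨∅, by simp, by simp⟩
  | mul_simple_left w i ih =>
    obtain ⟨A, hA, hw⟩ := ih
    have hmul : Abelianization.of (cs.simple i * w) = simpleClass cs i * ∏ c ∈ A, c := by
      rw [map_mul, hw, simpleClass]
    by_cases hi : simpleClass cs i ∈ A
    · refine ⟨A.erase (simpleClass cs i), fun c hc ↦ hA (Finset.mem_of_mem_erase hc), ?_⟩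
      rw [← Finset.mul_prod_erase A _ hi, ← mul_assoc, simpleClass_mul_self, one_mul] at hmul
      exact hmul
    · refine ⟨insert (simpleClass cs i) A, ?_, by rw [hmul, Finset.prod_insert hi]⟩
      rw [Finset.coe_insert, Set.insert_subset_iff]
      exact ⟨⟨i, rfl⟩, hA⟩

lemma supp_injective : Function.Injective (supp cs) := by
  intro v w h
  obtain ⟨A, hA, rfl⟩ := exists_finset_prod cs v
  obtain ⟨A', hA', rfl⟩ := exists_finset_prod cs w
  rw [supp_prod cs hA, supp_prod cs hA', Finset.coe_inj] at h
  rw [h]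

lemma mem_map_parabolic {T : Set B} {v : Abelianization W} :
    v ∈ (cs.parabolic T).map Abelianization.of ↔ supp cs v ⊆ simpleClass cs '' T := by
  constructor
  · rintro ⟨w, hw, rfl⟩ c hc
    by_contra hcT
    have hle : cs.parabolic T ≤ ((coord cs c).comp Abelianization.of).ker := by
      rw [CoxeterSystem.parabolic, Subgroup.closure_le]
      rintro _ ⟨i, hi, rfl⟩
      by_contra hne
      exact hcT ⟨i, hi, (coord_simpleClass cs c i).1 hne⟩
    exact hc (hle hw)
  · intro h
    obtain ⟨A, hA, rfl⟩ := exists_finset_prod cs v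
    rw [supp_prod cs hA] at h
    refine prod_mem fun c hc ↦ ?_
    obtain ⟨i, hi, rfl⟩ := h hc
    exact ⟨_, simple_mem_parabolic cs hi, rfl⟩

lemma ncard_setOf_supp_subset {D : Set (Abelianization W)} (hD : D ⊆ Set.range (simpleClass cs))
    (hfin : D.Finite) : {v | supp cs v ⊆ D}.ncard = 2 ^ D.ncard := by
  have himage : supp cs '' {v | supp cs v ⊆ D} = 𝒫 D := by
    refine Set.Subset.antisymm (Set.image_subset_iff.2 fun v hv ↦ hv) fun E hE ↦ ?_
    lift E to Finset (Abelianization W) using hfin.subset hE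
    have hprod := supp_prod cs (hE.trans hD)
    exact ⟨_, hprod.trans_subset hE, hprod⟩
  rw [← Set.ncard_image_of_injective _ (supp_injective cs), himage, Set.ncard_powerset D hfin]

/-! ### Transfer along an isomorphism -/

lemma of_conj {G : Type*} [Group G] (g x : G) :
    Abelianization.of (g * x * g⁻¹) = Abelianization.of x := by
  rw [map_mul, map_mul, map_inv, mul_inv_cancel_comm]

lemma map_of_conjSubgroup {G : Type*} [Group G] (g : G) (P : Subgroup G) :
    (conjSubgroup g P).map Abelianization.of = P.map Abelianization.of := by
  rw [conjSubgroup, Subgroup.map_map]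
  congr 1
  exact MonoidHom.ext (of_conj g)

lemma nonempty_mulEquiv_of_map_eq_conjSubgroup {G G' : Type*} [Group G] [Group G'] (φ : G ≃* G')
    {P : Subgroup G} {P' : Subgroup G'} {g : G'} (h : P.map φ.toMonoidHom = conjSubgroup g P') :
    Nonempty (P ≃* P') :=
  ⟨(P.equivMapOfInjective φ.toMonoidHom φ.injective).trans <| (MulEquiv.subgroupCongr h).trans
    (P'.equivMapOfInjective _ (MulAut.conj g).injective).symm⟩

variable {B' W' : Type*} [Group W'] {M' : CoxeterMatrix B'} (cs' : CoxeterSystem M' W')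

lemma eq_of_map_eq_conjSubgroup {G : Type*} [Group G] {P : Subgroup G} {φ : G →* W'}
    {T₁ T₂ : Set B'} {w₁ w₂ : W'} (hT₁ : cs'.IsMaxSpherical T₁) (hT₂ : cs'.IsMaxSpherical T₂)
    (h₁ : P.map φ = conjSubgroup w₁ (cs'.parabolic T₁))
    (h₂ : P.map φ = conjSubgroup w₂ (cs'.parabolic T₂)) : T₁ = T₂ := by
  refine eq_of_conj_mem_parabolic cs' hT₂ hT₁.1 (w₂⁻¹ * w₁) fun u hu ↦ ?_
  have hconj : w₂ * u * w₂⁻¹ ∈ conjSubgroup w₁ (cs'.parabolic T₁) :=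
    h₁ ▸ h₂ ▸ ⟨u, hu, rfl⟩
  obtain ⟨x, hx, hxu : w₁ * x * w₁⁻¹ = w₂ * u * w₂⁻¹⟩ := hconj
  have hx_eq : (w₂⁻¹ * w₁)⁻¹ * u * (w₂⁻¹ * w₁) = x := calc
    _ = w₁⁻¹ * (w₂ * u * w₂⁻¹) * w₁ := by group
    _ = w₁⁻¹ * (w₁ * x * w₁⁻¹) * w₁ := by rw [hxu]
    _ = x := by group
  rwa [hx_eq]

lemma supp_subset_image_iff (φ : W ≃* W') {T : Set B} {T' : Set B'} {w' : W'}
    (h : (cs.parabolic T).map φ.toMonoidHom = conjSubgroup w' (cs'.parabolic T'))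
    (v : Abelianization W) :
    supp cs v ⊆ simpleClass cs '' T ↔
      supp cs' (φ.abelianizationCongr v) ⊆ simpleClass cs' '' T' := by
  rw [← mem_map_parabolic, ← mem_map_parabolic, ← map_of_conjSubgroup w', ← h, Subgroup.map_map,
    show Abelianization.of.comp φ.toMonoidHom =
      φ.abelianizationCongr.toMonoidHom.comp Abelianization.of from rfl, ← Subgroup.map_map]
  exact (Subgroup.mem_map_iff_mem φ.abelianizationCongr.injective).symm

lemma simpleClass_mem_image_iff (φ : W ≃* W') {T : Set B} {T' : Set B'} {w' : W'}
    (h : (cs.parabolic T).map φ.toMonoidHom = conjSubgroup w' (cs'.parabolic T'))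
    {p : B} {m : B'} (hpm : φ.abelianizationCongr (simpleClass cs p) = simpleClass cs' m) :
    simpleClass cs p ∈ simpleClass cs '' T ↔ simpleClass cs' m ∈ simpleClass cs' '' T' := by
  rw [← Set.singleton_subset_iff, ← supp_simpleClass, supp_subset_image_iff cs cs' φ h, hpm,
    supp_simpleClass, Set.singleton_subset_iff]

lemma ncard_iInter_image_simpleClass [Finite B] [Finite B'] {ι : Type*} [Nonempty ι] (φ : W ≃* W')
    {T : ι → Set B} {T' : ι → Set B'}
    (h : ∀ a, ∃ w', (cs.parabolic (T a)).map φ.toMonoidHom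
      = conjSubgroup w' (cs'.parabolic (T' a))) :
    (⋂ a, simpleClass cs '' T a).ncard = (⋂ a, simpleClass cs' '' T' a).ncard := by
  have hrange : (⋂ a, simpleClass cs '' T a) ⊆ Set.range (simpleClass cs) :=
    (Set.iInter_subset _ (Classical.arbitrary ι)).trans (Set.image_subset_range _ _)
  have hrange' : (⋂ a, simpleClass cs' '' T' a) ⊆ Set.range (simpleClass cs') :=
    (Set.iInter_subset _ (Classical.arbitrary ι)).trans (Set.image_subset_range _ _)
  have hpre : φ.abelianizationCongr ⁻¹' {v | supp cs' v ⊆ ⋂ a, simpleClass cs' '' T' a}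
      = {v | supp cs v ⊆ ⋂ a, simpleClass cs '' T a} := by
    ext v
    change supp cs' (φ.abelianizationCongr v) ⊆ _ ↔ supp cs v ⊆ _
    rw [Set.subset_iInter_iff, Set.subset_iInter_iff]
    exact forall_congr' fun a ↦ (supp_subset_image_iff cs cs' φ (h a).choose_spec v).symm
  have hcard := congrArg Set.ncard hpre
  rw [Set.ncard_preimage_of_injective_subset_range φ.abelianizationCongr.injective
    (by simp [φ.abelianizationCongr.surjective.range_eq]),
    ncard_setOf_supp_subset cs hrange (Set.toFinite _),
    ncard_setOf_supp_subset cs' hrange' (Set.toFinite _)] at hcard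
  exact (Nat.pow_right_injective le_rfl hcard).symm

/-- The bounds `2 ^ |T'| ≤ |W'_{T'}| = |W_T| = 2 ^ |T|` and `|T| = |[T]| = |[T']| ≤ |T'|` force
equality throughout. -/
lemma injOn_simpleClass_of_map_eq_conjSubgroup [Finite B] [Finite B'] (φ : W ≃* W') {T : Set B}
    {T' : Set B'} {w' : W'}
    (h : (cs.parabolic T).map φ.toMonoidHom = conjSubgroup w' (cs'.parabolic T'))
    (e : cs.parabolic T ≃* Multiplicative (T → ZMod 2)) (hinj : Set.InjOn (simpleClass cs) T) :
    Set.InjOn (simpleClass cs') T' := by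
  obtain ⟨f⟩ := nonempty_mulEquiv_of_map_eq_conjSubgroup φ h
  have e' : cs'.parabolic T' ≃* Multiplicative (T → ZMod 2) := f.symm.trans e
  have hcard : Nat.card (cs'.parabolic T') = 2 ^ T.ncard := by
    rw [Nat.card_congr e'.toEquiv, Nat.card_congr Multiplicative.toAdd, Nat.card_fun,
      Nat.card_zmod, Nat.card_coe_set_eq]
  have hle : T'.ncard ≤ T.ncard := by
    rw [← Nat.pow_le_pow_iff_right one_lt_two, ← hcard]
    exact two_pow_ncard_le_card_parabolic cs' (Finite.of_equiv _ e'.symm.toEquiv)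
      (pairwise_eq_two_of_mulEquiv cs' e')
  have himage : (simpleClass cs '' T).ncard = (simpleClass cs' '' T').ncard := by
    simpa only [Set.iInter_const] using
      ncard_iInter_image_simpleClass cs cs' φ (T := fun _ : Unit ↦ T) fun _ ↦ ⟨w', h⟩
  refine Set.injOn_of_ncard_image_eq ((Set.ncard_image_le (Set.toFinite _)).antisymm ?_)
    (Set.toFinite _)
  rwa [← himage, hinj.ncard_image]

/-! ### Odd edges -/

lemma finite_closure_pair {G : Type*} [Group G] {a b : G} (ha : a * a = 1) (hb : b * b = 1)
    (hab : IsOfFinOrder (a * b)) : Finite (Subgroup.closure {a, b}) := by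
  have hZ : (Subgroup.zpowers (a * b) : Set G).Finite := finite_zpowers.2 hab
  have hinv : (a * b)⁻¹ = b * a := by
    rw [mul_inv_rev, inv_eq_of_mul_eq_one_left ha, inv_eq_of_mul_eq_one_left hb]
  have hrot : a * b ∈ Subgroup.zpowers (a * b) := Subgroup.mem_zpowers _
  -- The dihedral group is the union of the rotations and the rotations times `a`.
  set F : Set G := {x | x ∈ Subgroup.zpowers (a * b) ∨ x * a ∈ Subgroup.zpowers (a * b)}
  have hF : F.Finite := hZ.union (hZ.preimage (mul_left_injective a).injOn)
  have hFa {x : G} (hx : x ∈ F) : x * a ∈ F := by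
    refine hx.symm.imp_right fun hx ↦ ?_
    rwa [mul_assoc, ha, mul_one]
  have hFb {x : G} (hx : x ∈ F) : x * b ∈ F := by
    refine hx.symm.imp (fun hx ↦ ?_) fun hx ↦ ?_
    · have := mul_mem hx hrot
      rwa [mul_assoc, ← mul_assoc a, ha, one_mul] at this
    · rw [mul_assoc, ← hinv]
      exact mul_mem hx (inv_mem hrot)
  refine (hF.subset fun x hx ↦ ?_).to_subtype
  induction hx using Subgroup.closure_induction_right with
  | one => exact Or.inl (one_mem _)
  | mul_right x _ y hy ih =>
    rcases hy with rfl | rfl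
    exacts [hFa ih, hFb ih]
  | mul_inv_cancel x _ y hy ih =>
    rcases hy with rfl | rfl
    · rw [inv_eq_of_mul_eq_one_left ha]
      exact hFa ih
    · rw [inv_eq_of_mul_eq_one_left hb]
      exact hFb ih

lemma isSpherical_pair {i j : B} (h : M i j ≠ 0) : cs.IsSpherical {i, j} := by
  rw [CoxeterSystem.IsSpherical, CoxeterSystem.parabolic, Set.image_pair]
  refine finite_closure_pair (cs.simple_mul_simple_self i) (cs.simple_mul_simple_self j) ?_
  rwa [← orderOf_pos_iff, orderOf_simple_mul_simple, Nat.pos_iff_ne_zero]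

lemma ne_zero_of_isSpherical {T : Set B} (hT : cs.IsSpherical T) {i j : B} (hi : i ∈ T)
    (hj : j ∈ T) : M i j ≠ 0 := by
  have : Finite (cs.parabolic T) := hT
  have hpos := orderOf_pos
    (⟨_, mul_mem (simple_mem_parabolic cs hi) (simple_mem_parabolic cs hj)⟩ : cs.parabolic T)
  rw [Subgroup.orderOf_mk, orderOf_simple_mul_simple] at hpos
  exact hpos.ne'

lemma odd_of_simpleClass_eq
    (h2 : ¬ ∃ i j k : B, i ≠ j ∧ j ≠ k ∧ i ≠ k ∧ Odd (M i j) ∧ Odd (M j k))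
    {i j : B} (h : simpleClass cs i = simpleClass cs j) : Odd (M i j) := by
  rw [simpleClass_eq_iff] at h
  induction h with
  | refl => simp
  | @tail j k _ hjk hij =>
    by_cases hik : i = k
    · simp [hik]
    by_cases hne : i = j
    · rwa [hne]
    by_cases hne' : j = k
    · rwa [← hne']
    exact absurd ⟨i, j, k, hne, hne', hik, hij, hjk⟩ h2

lemma mem_pair_of_simpleClass_eq
    (h2 : ¬ ∃ i j k : B, i ≠ j ∧ j ≠ k ∧ i ≠ k ∧ Odd (M i j) ∧ Odd (M j k))
    {p r n : B} (hpr : p ≠ r) (hodd : Odd (M p r)) (h : simpleClass cs n = simpleClass cs p) :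
    n ∈ ({p, r} : Set B) := by
  by_contra hn
  rw [Set.mem_insert_iff, Set.mem_singleton_iff, not_or] at hn
  exact h2 ⟨n, p, r, hn.1, hpr, hn.2, odd_of_simpleClass_eq cs h2 h, hodd⟩

lemma eq_of_inter_pair_nonempty {cs : CoxeterSystem M W} [Finite B]
    {p r : B} (hmax : cs.IsMaxSpherical {p, r})
    (hcard : {T : Set B | cs.IsMaxSpherical T ∧ (T ∩ {p, r}).Nonempty}.ncard ≤ 2)
    {T₁ T₂ : Set B} (hT₁ : cs.IsMaxSpherical T₁) (hT₂ : cs.IsMaxSpherical T₂)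
    (hne₁ : T₁ ≠ {p, r}) (hne₂ : T₂ ≠ {p, r})
    (hmeet₁ : (T₁ ∩ {p, r}).Nonempty) (hmeet₂ : (T₂ ∩ {p, r}).Nonempty) : T₁ = T₂ := by
  by_contra hne
  have hsub : ({T₁, T₂, {p, r}} : Set (Set B)) ⊆
      {T : Set B | cs.IsMaxSpherical T ∧ (T ∩ {p, r}).Nonempty} := by
    rintro T (rfl | rfl | rfl)
    exacts [⟨hT₁, hmeet₁⟩, ⟨hT₂, hmeet₂⟩, ⟨hmax, p, by simp, by simp⟩]
  have hthree := Set.ncard_le_ncard hsub (Set.toFinite _)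
  rw [Set.ncard_eq_three.2 ⟨T₁, T₂, {p, r}, hne, hne₁, hne₂, rfl⟩] at hthree
  lia

lemma ne_pair_of_pairwise_eq_two {T : Set B} (hT : T.Pairwise fun i j ↦ M i j = 2) {p r : B}
    (hpr : p ≠ r) (hodd : Odd (M p r)) : T ≠ {p, r} := by
  rintro rfl
  rw [hT (by simp) (by simp) hpr] at hodd
  exact absurd hodd (by decide)

lemma commute_of_conj_mem_parabolic {T : Set B} (hT : T.Pairwise fun i j ↦ M i j = 2) {g x y : W}
    (hx : g⁻¹ * x * g ∈ cs.parabolic T) (hy : g⁻¹ * y * g ∈ cs.parabolic T) : Commute x y := by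
  have hcomm : ∀ a ∈ cs.simple '' T, ∀ b ∈ cs.simple '' T, a * b = b * a := by
    rintro _ ⟨p, hp, rfl⟩ _ ⟨r, hr, rfl⟩
    rcases eq_or_ne p r with rfl | hpr
    · rfl
    · exact commute_of_eq_two cs (hT hp hr hpr)
  have : IsMulCommutative (cs.parabolic T) := Subgroup.isMulCommutative_closure hcomm
  have hconj : Commute (g⁻¹ * x * g) (g⁻¹ * y * g) :=
    congrArg Subtype.val (mul_comm' (⟨_, hx⟩ : cs.parabolic T) ⟨_, hy⟩)
  simpa using (Commute.conj_iff g⁻¹).1 (by simpa using hconj)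

lemma exists_odd_pair_of_not_commute (h0 : ∀ i j : B, M i j ≠ 0 → Even (M i j) → M i j = 2)
    (h1 : ∀ i j : B, i ≠ j → Odd (M i j) → cs.IsMaxSpherical {i, j})
    (H : Subgroup W) [Finite H] {x y : W} (hx : x ∈ H) (hy : y ∈ H) (hxy : ¬ Commute x y) :
    ∃ p r g, p ≠ r ∧ Odd (M p r) ∧ ∀ h ∈ H, g⁻¹ * h * g ∈ cs.parabolic {p, r} := by
  obtain ⟨g, U, hU, hH⟩ := exists_isSpherical_of_finite cs H
  obtain ⟨p, hp, r, hr, hpr, hne2⟩ : ∃ p ∈ U, ∃ r ∈ U, p ≠ r ∧ M p r ≠ 2 := by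
    by_contra! hU2
    exact hxy (commute_of_conj_mem_parabolic cs (fun p hp r hr ↦ hU2 p hp r hr) (hH x hx) (hH y hy))
  have hodd : Odd (M p r) := Nat.not_even_iff_odd.1 fun heven ↦
    hne2 (h0 p r (ne_zero_of_isSpherical cs hU hp hr) heven)
  refine ⟨p, r, g, hpr, hodd, ?_⟩
  rwa [← (h1 p r hpr hodd).2 U hU (Set.pair_subset hp hr)]

lemma of_mem_pair_of_conj_mem_parabolic {p r : B} (hodd : Odd (M p r)) {g x : W}
    (hx : g⁻¹ * x * g ∈ cs.parabolic {p, r}) :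
    Abelianization.of x = 1 ∨ Abelianization.of x = simpleClass cs p := by
  have hmem := Subgroup.mem_map_of_mem Abelianization.of hx
  have hconj := of_conj g⁻¹ x
  rw [inv_inv] at hconj
  rw [mem_map_parabolic, hconj, Set.image_pair, ← simpleClass_eq_of_odd cs hodd,
    Set.pair_eq_singleton, Set.subset_singleton_iff_eq, ← supp_simpleClass, ← supp_one cs,
    (supp_injective cs).eq_iff, (supp_injective cs).eq_iff] at hmem
  exact hmem

lemma exists_odd_pair_of_odd (h0 : ∀ i j : B, M i j ≠ 0 → Even (M i j) → M i j = 2)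
    (h1 : ∀ i j : B, i ≠ j → Odd (M i j) → cs.IsMaxSpherical {i, j}) (φ : W ≃* W')
    {i l : B'} (hil : i ≠ l) (hodd : Odd (M' i l)) :
    ∃ p r, p ≠ r ∧ Odd (M p r) ∧ φ.abelianizationCongr (simpleClass cs p) = simpleClass cs' i := by
  have : Finite (cs'.parabolic {i, l}) := isSpherical_pair cs' hodd.pos.ne'
  have : Finite ((cs'.parabolic {i, l}).map φ.symm.toMonoidHom) :=
    Set.Finite.image _ (Set.toFinite (cs'.parabolic {i, l} : Set W'))
  have hmem {m : B'} (hm : m ∈ ({i, l} : Set B')) : φ.symm (cs'.simple m) ∈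
      (cs'.parabolic {i, l}).map φ.symm.toMonoidHom :=
    Subgroup.mem_map_of_mem _ (simple_mem_parabolic cs' hm)
  have hncomm : ¬ Commute (φ.symm (cs'.simple i)) (φ.symm (cs'.simple l)) := fun hcomm ↦ by
    rw [eq_two_of_commute cs' hil (by simpa using hcomm.map φ)] at hodd
    exact absurd hodd (by decide)
  obtain ⟨p, r, g, hpr, hpro, hH⟩ := exists_odd_pair_of_not_commute cs h0 h1
    ((cs'.parabolic {i, l}).map φ.symm.toMonoidHom) (hmem (by simp)) (hmem (by simp)) hncomm
  refine ⟨p, r, hpr, hpro, ?_⟩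
  have himage : φ.abelianizationCongr (Abelianization.of (φ.symm (cs'.simple i))) =
      simpleClass cs' i := by
    rw [abelianizationCongr_of, MulEquiv.apply_symm_apply, simpleClass]
  rcases of_mem_pair_of_conj_mem_parabolic cs hpro (hH _ (hmem (m := i) (by simp))) with h | h
  · rw [h, map_one] at himage
    exact absurd himage.symm (simpleClass_ne_one cs' i)
  · rw [← h, himage]

lemma injOn_simpleClass_iUnion
    (h2 : ¬ ∃ i j k : B, i ≠ j ∧ j ≠ k ∧ i ≠ k ∧ Odd (M i j) ∧ Odd (M j k))
    {ι : Type*} {T : ι → Set B} (hT2 : ∀ a, (T a).Pairwise fun i j ↦ M i j = 2)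
    (hmeet : ∀ p r, p ≠ r → Odd (M p r) → ∀ a b, (T a ∩ {p, r}).Nonempty →
      (T b ∩ {p, r}).Nonempty → T a = T b) :
    Set.InjOn (simpleClass cs) (⋃ a, T a) := by
  intro i hi j hj hij
  obtain ⟨a, hi⟩ := Set.mem_iUnion.1 hi
  obtain ⟨b, hj⟩ := Set.mem_iUnion.1 hj
  by_contra hne
  have hodd : Odd (M i j) := odd_of_simpleClass_eq cs h2 hij
  have hab : T a = T b := hmeet i j hne hodd a b ⟨i, hi, by simp⟩ ⟨j, hj, by simp⟩
  rw [hT2 a hi (hab ▸ hj) hne] at hodd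
  exact absurd hodd (by decide)

lemma injOn_simpleClass_iUnion_of_map_eq_conjSubgroup
    (h0 : ∀ i j : B, M i j ≠ 0 → Even (M i j) → M i j = 2)
    (h1 : ∀ i j : B, i ≠ j → Odd (M i j) → cs.IsMaxSpherical {i, j})
    (h2 : ¬ ∃ i j k : B, i ≠ j ∧ j ≠ k ∧ i ≠ k ∧ Odd (M i j) ∧ Odd (M j k))
    (φ : W ≃* W') {ι : Type*} {T : ι → Set B} {T' : ι → Set B'}
    (hmeet : ∀ p r, p ≠ r → Odd (M p r) → ∀ a b, (T a ∩ {p, r}).Nonempty →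
      (T b ∩ {p, r}).Nonempty → T a = T b)
    (hTmax' : ∀ a, cs'.IsMaxSpherical (T' a))
    (hconj : ∀ a, ∃ w', (cs.parabolic (T a)).map φ.toMonoidHom
      = conjSubgroup w' (cs'.parabolic (T' a)))
    (hinj : ∀ a, Set.InjOn (simpleClass cs') (T' a)) :
    Set.InjOn (simpleClass cs') (⋃ a, T' a) := by
  intro i hi j hj hij
  obtain ⟨a, hi⟩ := Set.mem_iUnion.1 hi
  obtain ⟨b, hj⟩ := Set.mem_iUnion.1 hj
  by_contra hne
  obtain ⟨l, hil, hodd⟩ := exists_odd_of_simpleClass_eq cs' hne hij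
  obtain ⟨p, r, hpr, hpro, hpi⟩ := exists_odd_pair_of_odd cs cs' h0 h1 φ hil hodd
  have hTpr {c : ι} {m : B'} (hm : m ∈ T' c) (him : simpleClass cs' i = simpleClass cs' m) :
      (T c ∩ {p, r}).Nonempty := by
    obtain ⟨w', hw'⟩ := hconj c
    obtain ⟨n, hn, hnp⟩ :=
      (simpleClass_mem_image_iff cs cs' φ hw' (hpi.trans him)).2 (Set.mem_image_of_mem _ hm)
    exact ⟨n, hn, mem_pair_of_simpleClass_eq cs h2 hpr hpro hnp⟩
  have hab : T a = T b := hmeet p r hpr hpro a b (hTpr hi rfl) (hTpr hj hij)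
  obtain ⟨w₁, hw₁⟩ := hconj a
  obtain ⟨w₂, hw₂⟩ := hconj b
  have hab' : T' a = T' b :=
    eq_of_map_eq_conjSubgroup cs' (hTmax' a) (hTmax' b) hw₁ (hab ▸ hw₂)
  exact hne (hinj a hi (hab' ▸ hj) hij)

lemma ncard_iInter_image {α β ι : Type*} [Nonempty ι] {f : α → β} {s : ι → Set α}
    (h : Set.InjOn f (⋃ a, s a)) : (⋂ a, f '' s a).ncard = (⋂ a, s a).ncard := by
  rw [← h.image_iInter_eq, (h.mono Set.iInter_subset_iUnion).ncard_image]

end Coxeter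

open Coxeter

/-- Let `(W,S)` satisfy conditions (0)–(3) and let `φ : W → W'` be an isomorphism onto the
Coxeter group of a system `(W',S')`. If `T_1, …, T_k` are maximal spherical subsets of `S`
and `T'_1, …, T'_k` are maximal spherical subsets of `S'` with `φ(W_{T_i})` conjugate to
`W'_{T'_i}` and `W_{T_i} ≅ (ℤ/2ℤ)^{|T_i|}` for each `i`, then
`|T_1 ∩ ⋯ ∩ T_k| = |T'_1 ∩ ⋯ ∩ T'_k|`. -/
theorem ncard_iInter_eq {B B' : Type*} [Fintype B] [Fintype B']
    {W W' : Type*} [Group W] [Group W']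
    {M : CoxeterMatrix B} (cs : CoxeterSystem M W)
    {M' : CoxeterMatrix B'} (cs' : CoxeterSystem M' W')
    (h0 : ∀ i j : B, orderOf (cs.simple i * cs.simple j) ≠ 0 →
      Even (orderOf (cs.simple i * cs.simple j)) → orderOf (cs.simple i * cs.simple j) = 2)
    (h1 : ∀ i j : B, i ≠ j → Odd (orderOf (cs.simple i * cs.simple j)) →
      cs.IsMaxSpherical {i, j})
    (h2 : ¬ ∃ i j k : B, i ≠ j ∧ j ≠ k ∧ i ≠ k ∧
      Odd (orderOf (cs.simple i * cs.simple j)) ∧ Odd (orderOf (cs.simple j * cs.simple k)))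
    (h3 : ∀ i j : B, i ≠ j → Odd (orderOf (cs.simple i * cs.simple j)) →
      {T : Set B | cs.IsMaxSpherical T ∧ (T ∩ {i, j}).Nonempty}.ncard ≤ 2)
    (φ : W ≃* W')
    (k : ℕ) (hk : 0 < k)
    (T : Fin k → Set B) (T' : Fin k → Set B')
    (hTmax : ∀ i, cs.IsMaxSpherical (T i))
    (hTmax' : ∀ i, cs'.IsMaxSpherical (T' i))
    (hconj : ∀ i, ∃ w' : W', Subgroup.map φ.toMonoidHom (cs.parabolic (T i))
      = conjSubgroup w' (cs'.parabolic (T' i)))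
    (hz2 : ∀ i, Nonempty ((cs.parabolic (T i)) ≃* Multiplicative ((T i) → ZMod 2))) :
    (⋂ i, T i).ncard = (⋂ i, T' i).ncard := by
  have : Nonempty (Fin k) := ⟨⟨0, hk⟩⟩
  simp only [orderOf_simple_mul_simple] at h0 h1 h2 h3
  have hT2 (a : Fin k) : (T a).Pairwise fun i j ↦ M i j = 2 :=
    pairwise_eq_two_of_mulEquiv cs (hz2 a).some
  have hmeet (p r : B) (hpr : p ≠ r) (hodd : Odd (M p r)) (a b : Fin k) :
      (T a ∩ {p, r}).Nonempty → (T b ∩ {p, r}).Nonempty → T a = T b :=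
    eq_of_inter_pair_nonempty (h1 p r hpr hodd) (h3 p r hpr hodd) (hTmax a) (hTmax b)
      (ne_pair_of_pairwise_eq_two (hT2 a) hpr hodd) (ne_pair_of_pairwise_eq_two (hT2 b) hpr hodd)
  have hinj : Set.InjOn (simpleClass cs) (⋃ a, T a) := injOn_simpleClass_iUnion cs h2 hT2 hmeet
  have hinj' (a : Fin k) : Set.InjOn (simpleClass cs') (T' a) :=
    injOn_simpleClass_of_map_eq_conjSubgroup cs cs' φ (hconj a).choose_spec (hz2 a).some
      (hinj.mono (Set.subset_iUnion T a))
  calc (⋂ a, T a).ncard = (⋂ a, simpleClass cs '' T a).ncard := (ncard_iInter_image hinj).symm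
    _ = (⋂ a, simpleClass cs' '' T' a).ncard := ncard_iInter_image_simpleClass cs cs' φ hconj
    _ = (⋂ a, T' a).ncard := ncard_iInter_image <|
      injOn_simpleClass_iUnion_of_map_eq_conjSubgroup cs cs' h0 h1 h2 φ hmeet hTmax' hconj hinj'
end
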